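/- arXiv:2102.00285 — 2 statements merged into one kernel-verified Lean document; each statement's English description precedes it below -/
import Mathlib

section
/- Let G = ⟨a,b,c,… | V^k⟩ be a one-relator group whose single defining relator is a proper power V^k with k > 1 and V not itself a proper power in the free group on the generators. Then the image of V in G has order exactly k, and every element of finite order in G is a conjugate of a power of V. -/
namespace KMS
open FreeGroup

/-- Subgroup of the free group generated by the letters in `X`. -/
abbrev Kset {α : Type} (X : Set α) : Subgroup (FreeGroup α) :=
  Subgroup.closure (FreeGroup.of '' X)

/-- The letter `s` is essential in `r`: no conjugate of `r` avoids it. -/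
def Ess {α : Type} (r : FreeGroup α) (s : α) : Prop :=
  ∀ g : FreeGroup α, g * r * g⁻¹ ∉ Kset {x | x ≠ s}

/-- Normal closure of a single relator. -/
abbrev NC {G : Type} [Group G] (r : G) : Subgroup G := Subgroup.normalClosure {r}

/-- The Freiheitssatz for `r`. -/
def Frei {α : Type} (r : FreeGroup α) : Prop :=
  ∀ s, Ess r s → ∀ u ∈ Kset {x | x ≠ s}, u ∈ NC r → u = 1

/-- The torsion theorem for `r`. -/
def Tors {α : Type} (r : FreeGroup α) : Prop :=
  ∀ (g : FreeGroup α) (n : ℕ), 0 < n → g ^ n ∈ NC r →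
    ∃ h w, Commute w r ∧ g⁻¹ * (h * w * h⁻¹) ∈ NC r

/-- Word length. -/
noncomputable def nm {α : Type} (w : FreeGroup α) : ℕ := @FreeGroup.norm α (Classical.decEq α) w

lemma nm_mk_le {α : Type} (L : List (α × Bool)) : nm (FreeGroup.mk L) ≤ L.length :=
  @FreeGroup.norm_mk_le α L (Classical.decEq α)

lemma exists_list_nm {α : Type} (w : FreeGroup α) :
    ∃ L, FreeGroup.mk L = w ∧ L.length = nm w :=
  ⟨@FreeGroup.toWord α (Classical.decEq α) w, @FreeGroup.mk_toWord _ (Classical.decEq α) w, rfl⟩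

lemma nm_mul_le {α : Type} (x y : FreeGroup α) : nm (x * y) ≤ nm x + nm y :=
  @FreeGroup.norm_mul_le α (Classical.decEq α) x y

lemma nm_inv {α : Type} (x : FreeGroup α) : nm x⁻¹ = nm x :=
  @FreeGroup.norm_inv_eq α (Classical.decEq α) x

lemma mk_cons {α : Type} (x : α × Bool) (L : List (α × Bool)) :
    FreeGroup.mk (x :: L) = FreeGroup.mk [x] * FreeGroup.mk L := by
  rw [FreeGroup.mul_mk]; rfl

lemma mk_single {α : Type} (a : α) (b : Bool) :
    FreeGroup.mk [(a, b)] = if b then FreeGroup.of a else (FreeGroup.of a)⁻¹ := by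
  cases b
  · simp [FreeGroup.of, FreeGroup.inv_mk, FreeGroup.invRev]
  · rfl

lemma mk_mem_Kset {α : Type} {X : Set α} (L : List (α × Bool)) (h : ∀ x ∈ L, x.1 ∈ X) :
    FreeGroup.mk L ∈ Kset X := by
  induction L with
  | nil => exact one_mem _
  | cons x L ih =>
    rw [mk_cons]
    refine mul_mem ?_ (ih fun y hy => h y (List.mem_cons_of_mem _ hy))
    have hx : FreeGroup.of x.1 ∈ Kset X :=
      Subgroup.subset_closure ⟨x.1, h x List.mem_cons_self, rfl⟩
    obtain ⟨a, b⟩ := x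
    rw [mk_single]
    cases b
    · simpa using hx
    · simpa using hx

/-- count of occurrences of the letter `s` -/
noncomputable def cnt {α : Type} (s : α) (w : FreeGroup α) : ℕ :=
  letI := Classical.decEq α
  (w.toWord.map Prod.fst).count s

lemma cnt_mul_le {α : Type} (s : α) (x y : FreeGroup α) :
    cnt s (x * y) ≤ cnt s x + cnt s y := by
  classical
  unfold cnt
  letI := Classical.decEq α
  rw [← List.count_append, ← List.map_append]
  exact ((FreeGroup.toWord_mul_sublist x y).map _).count_le s

lemma cnt_inv {α : Type} (s : α) (x : FreeGroup α) : cnt s x⁻¹ = cnt s x := by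
  unfold cnt
  letI := Classical.decEq α
  rw [FreeGroup.toWord_inv, FreeGroup.invRev]
  simp [List.map_reverse, Function.comp_def]

lemma cnt_Kset {α : Type} (s : α) (x : FreeGroup α) (hx : x ∈ Kset {x | x ≠ s}) :
    cnt s x = 0 := by
  induction hx using Subgroup.closure_induction with
  | mem x hx =>
    obtain ⟨a, ha, rfl⟩ := hx
    simp [cnt, List.count_cons] 
    exact ha
  | one => simp [cnt]
  | mul x y _ _ hx hy => have := cnt_mul_le s x y; omega
  | inv x _ hx => rwa [cnt_inv]

lemma ess_list {α : Type} (r : FreeGroup α) :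
    ∃ (c : FreeGroup α) (L : List (α × Bool)), FreeGroup.mk L = c * r * c⁻¹ ∧
      L.length ≤ nm r ∧ ∀ x ∈ L, Ess (FreeGroup.mk L) x.1 := by
  letI := Classical.decEq α
  have hc := FreeGroup.reduceCyclically.conj_conjugator_reduceCyclically r.toWord
  have hcr := FreeGroup.reduceCyclically.isCyclicallyReduced (FreeGroup.isReduced_toWord (x := r))
  set L := FreeGroup.reduceCyclically r.toWord with hL
  set C := FreeGroup.reduceCyclically.conjugator r.toWord with hC
  refine ⟨(FreeGroup.mk C)⁻¹, L, ?_, ?_, ?_⟩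
  · have h2 : r = FreeGroup.mk C * FreeGroup.mk L * (FreeGroup.mk C)⁻¹ := by
      rw [FreeGroup.inv_mk, FreeGroup.mul_mk, FreeGroup.mul_mk, hc, FreeGroup.mk_toWord]
    rw [h2]; group
  · show _ ≤ r.toWord.length
    rw [← hc]; simp; omega
  · intro x hx g hg
    have h0 : ∀ n : ℕ, n * (L.map Prod.fst).count x.1 = cnt x.1 (FreeGroup.mk L ^ n) := by
      intro n
      have := (hcr.flatten_replicate n).isReduced
      unfold cnt
      rw [FreeGroup.pow_mk, FreeGroup.toWord_mk, this.reduce_eq, List.map_flatten, List.count_flatten]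
      simp
    have h1 : ∀ n : ℕ, cnt x.1 (FreeGroup.mk L ^ n) ≤ 2 * cnt x.1 g := by
      intro n
      have e : FreeGroup.mk L ^ n = g⁻¹ * (g * FreeGroup.mk L * g⁻¹) ^ n * g := by
        rw [conj_pow]; group
      rw [e]
      have a1 := cnt_mul_le x.1 (g⁻¹ * (g * FreeGroup.mk L * g⁻¹) ^ n) g
      have a2 := cnt_mul_le x.1 g⁻¹ ((g * FreeGroup.mk L * g⁻¹) ^ n)
      have a3 := cnt_Kset x.1 _ (pow_mem hg n)
      have a4 := cnt_inv x.1 g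
      omega
    have h2 := h1 (2 * cnt x.1 g + 1)
    rw [← h0] at h2
    have h3 : 0 < (L.map Prod.fst).count x.1 :=
      List.count_pos_iff.2 (List.mem_map_of_mem hx)
    nlinarith

end KMS

namespace KMS

section HNN
open HNNExtension
variable {G : Type} [Group G] {A B : Subgroup G} {φ : A ≃* B}

/-- Product of a list of letters in an HNN extension. -/
def hpr (φ : A ≃* B) (l : List (ℤˣ × G)) : HNNExtension G A B φ :=
  (l.map (fun x => HNNExtension.t ^ (x.1 : ℤ) * HNNExtension.of x.2)).prod

lemma hpr_append (l₁ l₂ : List (ℤˣ × G)) : hpr φ (l₁ ++ l₂) = hpr φ l₁ * hpr φ l₂ := by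
  simp [hpr]

lemma hpr_cons (x : ℤˣ × G) (l : List (ℤˣ × G)) :
    hpr φ (x :: l) = HNNExtension.t ^ (x.1 : ℤ) * HNNExtension.of x.2 * hpr φ l := by
  simp [hpr]

lemma hpr_flatten (l : List (ℤˣ × G)) (n : ℕ) :
    hpr φ (List.replicate n l).flatten = hpr φ l ^ n := by
  induction n with
  | zero => simp [hpr]
  | succ n ih => rw [List.replicate_succ, List.flatten_cons, hpr_append, ih, pow_succ']

lemma hnn_exists_list (x : HNNExtension G A B φ) :
    ∃ (g : G) (l : List (ℤˣ × G)), x = HNNExtension.of g * hpr φ l := by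
  obtain ⟨d⟩ := NormalWord.TransversalPair.nonempty G A B
  let w : NormalWord d := x • NormalWord.empty
  have : w.prod φ = x := by
    simp only [w, NormalWord.prod_smul, NormalWord.prod_empty, mul_one]
  exact ⟨w.head, w.toList, this.symm⟩

lemma hnn_conj (u : ℤˣ) (g : G) (hg : g ∈ toSubgroup A B u) :
    ∃ g' : G, (HNNExtension.t ^ (u : ℤ) * HNNExtension.of g * (HNNExtension.t ^ (u : ℤ))⁻¹ :
      HNNExtension G A B φ) = HNNExtension.of g' := by
  rcases Int.units_eq_one_or u with rfl | rfl
  · refine ⟨φ ⟨g, hg⟩, ?_⟩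
    rw [equiv_eq_conj]; simp
  · refine ⟨φ.symm ⟨g, hg⟩, ?_⟩
    rw [equiv_symm_eq_conj]; simp

lemma hnn_torsion (x : HNNExtension G A B φ) (n : ℕ) (hn : 0 < n) (hx : x ^ n = 1) :
    ∃ (c : HNNExtension G A B φ) (g : G), x = c * HNNExtension.of g * c⁻¹ := by
  classical
  let Q : ℕ → Prop := fun m => ∃ (c : HNNExtension G A B φ) (g : G) (l : List (ℤˣ × G)),
    l.length = m ∧ x = c * (HNNExtension.of g * hpr φ l) * c⁻¹
  have hQ : ∃ m, Q m := by
    obtain ⟨g, l, h⟩ := hnn_exists_list x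
    exact ⟨l.length, 1, g, l, rfl, by simpa using h⟩
  obtain ⟨c, g, l, hl, hxl⟩ := Nat.find_spec hQ
  have hmin : ∀ m, Q m → Nat.find hQ ≤ m := fun m hm => Nat.find_min' hQ hm
  generalize Nat.find hQ = m at hl hmin
  rcases List.eq_nil_or_concat l with rfl | ⟨l0, y, rfl⟩
  · exact ⟨c, g, by simpa [hpr] using hxl⟩
  exfalso
  obtain ⟨c', l, hl', hxl'⟩ : ∃ (c : HNNExtension G A B φ) (l : List (ℤˣ × G)),
      l.length = m ∧ x = c * hpr φ l * c⁻¹ := by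
    refine ⟨c * HNNExtension.of g, l0 ++ [(y.1, y.2 * g)], by simpa using hl, ?_⟩
    rw [hxl]
    simp [hpr_append, hpr_cons, mul_assoc, hpr]
  have hm : 0 < m := by rw [← hl]; simp
  clear hxl hl c g l0 y
  -- the cyclic condition
  have key : ∀ (c : HNNExtension G A B φ) (y z : ℤˣ × G) (l' : List (ℤˣ × G)),
      l'.length + 2 = m → x = c * hpr φ (y :: (l' ++ [z])) * c⁻¹ →
      z.2 ∈ toSubgroup A B z.1 → z.1 = y.1 := by
    intro c y z l' hlen hx' hz
    by_contra hne
    have hy : y.1 = -z.1 := by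
      rcases Int.units_eq_one_or y.1 with h | h <;> rcases Int.units_eq_one_or z.1 with h' | h' <;>
        simp_all
    obtain ⟨g', hg'⟩ := hnn_conj (φ := φ) z.1 z.2 hz
    have := hmin l'.length ⟨c * (HNNExtension.t ^ (z.1 : ℤ))⁻¹ * (HNNExtension.of g')⁻¹,
      g' * y.2, l', rfl, ?_⟩
    · omega
    · rw [hx', hpr_cons, hpr_append, hpr_cons, hy]
      have e : (HNNExtension.t ^ (z.1 : ℤ) * HNNExtension.of z.2 : HNNExtension G A B φ) =
          HNNExtension.of g' * HNNExtension.t ^ (z.1 : ℤ) := by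
        rw [← hg']; group
      rw [e]
      simp [hpr, mul_assoc]
  have hlast : ∀ z ∈ l.getLast?, ∀ y ∈ l.head?, z.2 ∈ toSubgroup A B z.1 → z.1 = y.1 := by
    intro z hz y hy
    cases l with
    | nil => simp at hz
    | cons y' l' =>
      rcases List.eq_nil_or_concat l' with rfl | ⟨l'', z', hcc⟩
      · simp at hz hy; subst hz; subst hy; intro _; rfl
      · rw [List.concat_eq_append] at hcc
        subst hcc
        simp at hy
        have hz' : z' = z := by
          rw [← List.cons_append] at hz
          rw [List.getLast?_concat] at hz; simpa using hz
        subst hz'; subst hy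
        exact key c' y' z' l'' (by simpa using hl') hxl'
  have hchain : l.IsChain (fun a b => a.2 ∈ toSubgroup A B a.1 → a.1 = b.1) := by
    rw [List.isChain_iff_forall_rel_of_append_cons_cons]
    intro z y l₁ l₂ hEq
    subst hEq
    refine key (c' * hpr φ (l₁ ++ [z])) y z (l₂ ++ l₁) ?_ ?_
    · rw [← hl']; simp; omega
    · rw [hxl']
      simp only [hpr_append, hpr_cons]
      simp [hpr, mul_assoc]
  have hl0 : l ≠ [] := by rintro rfl; simp at hl'; omega
  let W : NormalWord.ReducedWord G A B :=
    { head := 1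
      toList := (List.replicate n l).flatten
      chain := by
        rw [List.isChain_flatten (by simp [hl0.symm])]
        refine ⟨?_, List.isChain_replicate_of_rel _ hlast⟩
        intro l' hl''
        rw [List.mem_replicate] at hl''
        rw [hl''.2]; exact hchain }
  have hW : W.prod φ = 1 := by
    have e1 : W.prod φ = hpr φ (List.replicate n l).flatten := by
      simp [NormalWord.ReducedWord.prod, W, hpr]
    rw [e1, hpr_flatten]
    have : hpr φ l = c'⁻¹ * x * c' := by rw [hxl']; group
    rw [this]
    have e2 : (c'⁻¹ * x * c') ^ n = c'⁻¹ * x ^ n * c' := by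
      have := conj_pow (i := n) (a := c'⁻¹) (b := x)
      simpa using this
    rw [e2, hx]; simp
  have := ReducedWord.toList_eq_nil_of_mem_of_range φ W (by rw [hW]; exact one_mem _)
  have h3 : ((List.replicate n l).flatten).length = 0 := by
    rw [show (List.replicate n l).flatten = [] from this]; rfl
  simp [hl'] at h3
  omega
end HNN
end KMS

namespace KMS
section Coprod
open Monoid
variable {ι : Type} {M : ι → Type} [∀ i, Group (M i)]

/-- Product of a list of letters in a free product. -/
def cpr (l : List (Σ i, M i)) : CoprodI M := (l.map (fun x => CoprodI.of x.2)).prod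

lemma cpr_append (l₁ l₂ : List (Σ i, M i)) : cpr (l₁ ++ l₂) = cpr l₁ * cpr l₂ := by
  simp [cpr]

lemma cpr_cons (x : Σ i, M i) (l : List (Σ i, M i)) :
    cpr (x :: l) = CoprodI.of x.2 * cpr l := by
  simp [cpr]

lemma cpr_flatten (l : List (Σ i, M i)) (n : ℕ) :
    cpr (List.replicate n l).flatten = cpr l ^ n := by
  induction n with
  | zero => simp [cpr]
  | succ n ih => rw [List.replicate_succ, List.flatten_cons, cpr_append, ih, pow_succ']

lemma coprod_torsion (x : CoprodI M) (n : ℕ) (hn : 0 < n) (hx : x ^ n = 1) :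
    x = 1 ∨ ∃ (c : CoprodI M) (i : ι) (g : M i), x = c * CoprodI.of g * c⁻¹ := by
  classical
  let Q : ℕ → Prop := fun m => ∃ (c : CoprodI M) (l : List (Σ i, M i)),
    l.length = m ∧ x = c * cpr l * c⁻¹
  have hQ : ∃ m, Q m := by
    refine ⟨_, 1, (CoprodI.Word.equiv x).toList, rfl, ?_⟩
    have : (CoprodI.Word.equiv x).prod = x := CoprodI.Word.equiv.symm_apply_apply x
    rw [one_mul, inv_one, mul_one]
    exact this.symm
  obtain ⟨c, l, hl, hxl⟩ := Nat.find_spec hQ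
  have hmin : ∀ m, Q m → Nat.find hQ ≤ m := fun m hm => Nat.find_min' hQ hm
  generalize Nat.find hQ = m at hl hmin
  rcases Nat.lt_or_ge m 2 with h2 | h2
  · match l with
    | [] => left; simpa [cpr] using hxl
    | [y] => right; exact ⟨c, y.1, y.2, by simpa [cpr] using hxl⟩
    | _ :: _ :: _ => simp at hl; omega
  exfalso
  have key : ∀ (c : CoprodI M) (y z : Σ i, M i) (l' : List (Σ i, M i)),
      l'.length + 2 = m → x = c * cpr (y :: (l' ++ [z])) * c⁻¹ → z.1 ≠ y.1 := by
    rintro c ⟨i, y⟩ ⟨j, z⟩ l' hlen hx' hz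
    dsimp at hz
    subst hz
    have := hmin (l'.length + 1) ⟨c * (CoprodI.of z)⁻¹, ⟨j, z * y⟩ :: l', rfl, ?_⟩
    · omega
    · rw [hx', cpr_cons, cpr_append, cpr_cons, cpr_cons]
      simp [cpr, mul_assoc]
  have hlast : ∀ z ∈ l.getLast?, ∀ y ∈ l.head?, z.1 ≠ y.1 := by
    intro z hz y hy
    cases l with
    | nil => simp at hz
    | cons y' l' =>
      rcases List.eq_nil_or_concat l' with rfl | ⟨l'', z', hcc⟩
      · simp at hl; omega
      · rw [List.concat_eq_append] at hcc
        subst hcc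
        simp at hy
        have hz' : z' = z := by
          rw [← List.cons_append] at hz
          rw [List.getLast?_concat] at hz; simpa using hz
        subst hz'; subst hy
        exact key c y' z' l'' (by simpa using hl) hxl
  have hchain : l.IsChain (fun a b => a.1 ≠ b.1) := by
    rw [List.isChain_iff_forall_rel_of_append_cons_cons]
    intro z y l₁ l₂ hEq
    subst hEq
    refine key (c * cpr (l₁ ++ [z])) y z (l₂ ++ l₁) ?_ ?_
    · rw [← hl]; simp; omega
    · rw [hxl]
      simp only [cpr_append, cpr_cons]
      simp [cpr, mul_assoc]
  have hne : ∀ y ∈ l, y.2 ≠ 1 := by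
    intro y hy h1
    obtain ⟨l₁, l₂, rfl⟩ := List.append_of_mem hy
    have := hmin (l₁ ++ l₂).length ⟨c, l₁ ++ l₂, rfl, by
      rw [hxl]; simp [cpr_append, cpr_cons, h1]⟩
    simp at this hl
    omega
  have hl0 : l ≠ [] := by rintro rfl; simp at hl; omega
  let W : CoprodI.Word M :=
    { toList := (List.replicate n l).flatten
      ne_one := by
        intro y hy
        rw [List.mem_flatten] at hy
        obtain ⟨l', h1, h2⟩ := hy
        rw [List.mem_replicate] at h1
        rw [h1.2] at h2
        exact hne y h2
      chain_ne := by
        rw [List.isChain_flatten (by simp [hl0.symm])]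
        refine ⟨?_, List.isChain_replicate_of_rel _ hlast⟩
        intro l' hl''
        rw [List.mem_replicate] at hl''
        rw [hl''.2]; exact hchain }
  have hW : W.prod = 1 := by
    have e1 : W.prod = cpr (List.replicate n l).flatten := rfl
    rw [e1, cpr_flatten]
    have : cpr l = c⁻¹ * x * c := by rw [hxl]; group
    rw [this]
    have e2 : (c⁻¹ * x * c) ^ n = c⁻¹ * x ^ n * c := by
      have := conj_pow (i := n) (a := c⁻¹) (b := x)
      simpa using this
    rw [e2, hx]; simp
  have hWe : W = CoprodI.Word.empty := by
    apply CoprodI.Word.equiv.symm.injective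
    show W.prod = CoprodI.Word.empty.prod
    rw [hW]; simp
  have h3 : ((List.replicate n l).flatten).length = 0 := by
    show W.toList.length = 0
    rw [hWe]; rfl
  simp [hl] at h3
  omega
end Coprod

/-- The torsion theorem when the relator is a power of a generator. -/
lemma tors_base {α : Type} (a : α) (j : ℤ) : Tors (FreeGroup.of a ^ j) := by
  classical
  intro g n hn hg
  let d : α → ℕ := fun s => if s = a then j.natAbs else 0
  let M : α → Type := fun s => Multiplicative (ZMod (d s))
  let f : FreeGroup α →* Monoid.CoprodI M :=
    FreeGroup.lift (fun s => Monoid.CoprodI.of (i := s) (Multiplicative.ofAdd (1 : ZMod (d s))))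
  have hone : ∀ s (k : ℤ), (Multiplicative.ofAdd (1 : ZMod (d s))) ^ k =
      Multiplicative.ofAdd (k : ZMod (d s)) := by
    intro s k
    rw [← ofAdd_zsmul]; simp
  have hfs : ∀ s (k : ℤ), f (FreeGroup.of s ^ k) =
      Monoid.CoprodI.of (i := s) (Multiplicative.ofAdd (k : ZMod (d s))) := by
    intro s k
    rw [map_zpow, FreeGroup.lift_apply_of, ← map_zpow, hone]
  have hfN : NC (FreeGroup.of a ^ j) ≤ f.ker := by
    apply Subgroup.normalClosure_le_normal
    simp only [Set.singleton_subset_iff, SetLike.mem_coe, MonoidHom.mem_ker]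
    rw [hfs]
    have : ((j : ℤ) : ZMod (d a)) = 0 := by
      rw [ZMod.intCast_zmod_eq_zero_iff_dvd]; simp [d]
    rw [this]; simp
  -- the inverse
  let q := QuotientGroup.mk' (NC (FreeGroup.of a ^ j))
  have hq : ∀ s, (q (FreeGroup.of s)) ^ (d s : ℤ) = 1 := by
    intro s
    by_cases hs : s = a
    · subst hs
      rw [← map_zpow]
      have : FreeGroup.of s ^ (d s : ℤ) ∈ NC (FreeGroup.of s ^ j) := by
        have h0 : FreeGroup.of s ^ j ∈ NC (FreeGroup.of s ^ j) :=
          Subgroup.subset_normalClosure rfl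
        simp only [d, if_true]
        rcases Int.natAbs_eq j with h | h
        · rw [← h]; exact h0
        · have := inv_mem h0
          rw [← zpow_neg] at this
          rwa [show ((j.natAbs : ℕ) : ℤ) = -j by omega]
      exact (QuotientGroup.eq_one_iff _).2 this
    · simp [d, hs]
  let p : ∀ s, M s →* (FreeGroup α ⧸ NC (FreeGroup.of a ^ j)) := fun s =>
    AddMonoidHom.toMultiplicativeLeft (ZMod.lift (d s) ⟨MonoidHom.toAdditiveRight (zpowersHom _ (q (FreeGroup.of s))), by
      simpa using congrArg Additive.ofMul (hq s)⟩)
  have hp : ∀ s (k : ℤ), p s (Multiplicative.ofAdd (k : ZMod (d s))) = q (FreeGroup.of s ^ k) := by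
    intro s k
    have e := ZMod.lift_coe (d s) ⟨MonoidHom.toAdditiveRight (zpowersHom _ (q (FreeGroup.of s))), by
      simpa using congrArg Additive.ofMul (hq s)⟩ k
    rw [map_zpow]
    exact congrArg Additive.toMul e
  let P : Monoid.CoprodI M →* (FreeGroup α ⧸ NC (FreeGroup.of a ^ j)) := Monoid.CoprodI.lift p
  have hPf : ∀ w, P (f w) = q w := by
    intro w
    have : P.comp f = q := by
      ext s
      have := hfs s 1
      simp only [zpow_one] at this
      simp only [MonoidHom.comp_apply, this]
      simp only [P, Monoid.CoprodI.lift_of]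
      rw [hp]; simp
    exact DFunLike.congr_fun this w
  have hfg : f g ^ n = 1 := by
    rw [← map_pow]; exact hfN hg
  have hqs : Function.Surjective q := QuotientGroup.mk'_surjective _
  rcases coprod_torsion (f g) n hn hfg with h | ⟨c, s, m, hm⟩
  · refine ⟨1, 1, Commute.one_left _, ?_⟩
    have := hPf g
    rw [h, map_one] at this
    simpa using (QuotientGroup.eq_one_iff g).1 this.symm
  · obtain ⟨k, hk⟩ := ZMod.intCast_surjective (Multiplicative.toAdd m)
    have hmk : m = Multiplicative.ofAdd (k : ZMod (d s)) := by rw [hk]; rfl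
    obtain ⟨h, hh⟩ := hqs (P c)
    have hqg : q g = q (h * FreeGroup.of s ^ k * h⁻¹) := by
      rw [← hPf g, hm, map_mul, map_mul, map_inv, map_mul, map_mul, map_inv, hh]
      congr 2
      rw [hmk, ← hp]
      simp [P]
    by_cases hs : s = a
    · subst hs
      refine ⟨h, FreeGroup.of s ^ k, ?_, QuotientGroup.eq.1 hqg⟩
      exact (Commute.refl _).zpow_zpow _ _
    · -- then the element is trivial
      have hm1 : m = 1 := by
        have hmn : m ^ n = 1 := by
          apply Monoid.CoprodI.of_injective s
          rw [map_pow, map_one]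
          have : Monoid.CoprodI.of m = c⁻¹ * f g * c := by rw [hm]; group
          rw [this]
          have e2 : (c⁻¹ * f g * c) ^ n = c⁻¹ * f g ^ n * c := by
            simpa using conj_pow (i := n) (a := c⁻¹) (b := f g)
          rw [e2, hfg]; simp
        have hz : n • (Multiplicative.toAdd m) = 0 := by
          rw [← toAdd_pow, hmn]; rfl
        have hd : d s = 0 := by simp [d, hs]
        have key : ∀ (D : ℕ), D = 0 → ∀ y : ZMod D, n • y = 0 → y = 0 := by
          rintro _ rfl y hy
          have : n • (y : ℤ) = 0 := hy
          rw [nsmul_eq_mul] at this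
          rcases mul_eq_zero.1 this with h | h
          · simp at h; omega
          · exact h
        have := key (d s) hd _ hz
        rw [← ofAdd_toAdd m, this]; rfl
      refine ⟨1, 1, Commute.one_left _, ?_⟩
      have := hPf g
      rw [hm, hm1] at this
      simp only [map_one, mul_one, mul_inv_cancel] at this
      simpa using (QuotientGroup.eq_one_iff g).1 this.symm
end KMS

namespace KMS
section Push
open Monoid
variable {ι : Type} {G : ι → Type} {H : Type} [∀ i, Group (G i)] [Group H] {φ : ∀ i, H →* G i}

/-- Product of a list of letters in an amalgamated product. -/
def ppr (φ : ∀ i, H →* G i) (l : List (Σ i, G i)) : PushoutI φ :=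
  (l.map (fun x => PushoutI.of x.1 x.2)).prod

lemma ppr_append (l₁ l₂ : List (Σ i, G i)) : ppr φ (l₁ ++ l₂) = ppr φ l₁ * ppr φ l₂ := by
  simp [ppr]

lemma ppr_cons (x : Σ i, G i) (l : List (Σ i, G i)) :
    ppr φ (x :: l) = PushoutI.of x.1 x.2 * ppr φ l := by
  simp [ppr]

lemma ppr_inv (l : List (Σ i, G i)) :
    ppr φ (l.map (fun x => (⟨x.1, x.2⁻¹⟩ : Σ i, G i))).reverse = (ppr φ l)⁻¹ := by
  induction l with
  | nil => simp [ppr]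
  | cons x l ih =>
    rw [List.map_cons, List.reverse_cons, ppr_append, ih, ppr_cons, ppr_cons]
    simp [ppr]

lemma word_prod (w : CoprodI.Word G) :
    PushoutI.ofCoprodI (φ := φ) w.prod = ppr φ w.toList := by
  rw [CoprodI.Word.prod, map_list_prod, List.map_map, ppr]
  congr 1

lemma push_exists_list [Nonempty ι] (x : PushoutI φ) : ∃ l, x = ppr φ l := by
  induction x using PushoutI.induction_on with
  | of i g => exact ⟨[⟨i, g⟩], by simp [ppr]⟩
  | base h => 
    obtain ⟨i⟩ := ‹Nonempty ι›
    exact ⟨[⟨i, φ i h⟩], by simp [ppr, PushoutI.of_apply_eq_base]⟩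
  | mul x y hx hy =>
    obtain ⟨l, rfl⟩ := hx
    obtain ⟨l', rfl⟩ := hy
    exact ⟨l ++ l', (ppr_append _ _).symm⟩

lemma push_reduced (hφ : ∀ i, Function.Injective (φ i)) (l : List (Σ i, G i))
    (hne : ∀ y ∈ l, y.2 ∉ (φ y.1).range) (hch : l.IsChain (fun a b => a.1 ≠ b.1))
    (hl : ppr φ l ∈ (PushoutI.base φ).range) : l = [] := by
  let W : CoprodI.Word G :=
    { toList := l
      ne_one := fun y hy h1 => hne y hy (by rw [h1]; exact one_mem _)
      chain_ne := hch }
  have hr : PushoutI.Reduced φ W := hne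
  have := hr.eq_empty_of_mem_range hφ (by rw [word_prod]; exact hl)
  exact congrArg CoprodI.Word.toList this

lemma push_claim (hφ : ∀ i, Function.Injective (φ i)) (i : ι) (l : List (Σ i, G i)) (g' : G i)
    (hg' : g' ∉ (φ i).range) (hne : ∀ y ∈ l, y.2 ∉ (φ y.1).range)
    (hch : (l ++ [(⟨i, g'⟩ : Σ i, G i)]).IsChain (fun a b => a.1 ≠ b.1))
    (hfirst : ∀ y ∈ l.head?, i ≠ y.1) (hl : l ≠ []) (a' : G i)
    (heq : ppr φ l * PushoutI.of i g' * (ppr φ l)⁻¹ = PushoutI.of i a') : False := by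
  set L : List (Σ i, G i) := l ++ (⟨i, g'⟩ :: (l.map (fun x => (⟨x.1, x.2⁻¹⟩ : Σ i, G i))).reverse)
    with hL
  have hLp : ppr φ L = PushoutI.of i a' := by
    rw [hL, ppr_append, ppr_cons, ppr_inv, ← heq, mul_assoc]
  have hLne : ∀ y ∈ L, y.2 ∉ (φ y.1).range := by
    intro y hy
    rw [hL, List.mem_append, List.mem_cons, List.mem_reverse, List.mem_map] at hy
    rcases hy with hy | rfl | ⟨z, hz, rfl⟩
    · exact hne y hy
    · exact hg'
    · simpa using hne z hz
  have hLch : L.IsChain (fun a b => a.1 ≠ b.1) := by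
    rw [hL, List.isChain_split]
    refine ⟨hch, ?_⟩
    have e : (⟨i, g'⟩ :: (l.map (fun x => (⟨x.1, x.2⁻¹⟩ : Σ i, G i))).reverse) =
      (((l.map (fun x => (⟨x.1, x.2⁻¹⟩ : Σ i, G i))) ++ [(⟨i, g'⟩ : Σ i, G i)])).reverse := by
      simp
    rw [e, List.isChain_reverse]
    rw [List.isChain_append] at hch ⊢
    refine ⟨?_, List.isChain_singleton _, ?_⟩
    · rw [List.isChain_map]
      exact hch.1.imp (fun a b h => h.symm)
    · intro x hx y hy
      rw [List.getLast?_map] at hx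
      simp only [Option.mem_def, Option.map_eq_some_iff] at hx
      obtain ⟨z, hz, rfl⟩ := hx
      exact (hch.2.2 z hz y hy).symm
  have hLnil : L ≠ [] := by simp [hL]
  by_cases ha : a' ∈ (φ i).range
  · apply hLnil
    apply push_reduced hφ L hLne hLch
    rw [hLp]
    obtain ⟨h, rfl⟩ := ha
    exact ⟨h, (PushoutI.of_apply_eq_base φ i h).symm⟩
  · have := push_reduced hφ (⟨i, a'⁻¹⟩ :: L) ?_ ?_ ?_
    · simp at this
    · intro y hy
      rcases List.mem_cons.1 hy with rfl | hy
      · simpa using ha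
      · exact hLne y hy
    · rw [List.isChain_cons]
      refine ⟨?_, hLch⟩
      intro y hy
      apply hfirst y
      rw [hL, List.head?_append_of_ne_nil _ hl] at hy
      exact hy
    · rw [ppr_cons, hLp]
      simp

lemma push_malnormal (hφ : ∀ i, Function.Injective (φ i)) (i : ι) (g : G i)
    (hg : ∀ c, c * g * c⁻¹ ∉ (φ i).range) (h : PushoutI φ)
    (hh : h * PushoutI.of i g * h⁻¹ ∈ (PushoutI.of (φ := φ) i).range) :
    h ∈ (PushoutI.of (φ := φ) i).range := by
  classical
  haveI : Nonempty ι := ⟨i⟩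
  let Q : ℕ → Prop := fun n => ∃ (l : List (Σ i, G i)) (a : G i), l.length = n ∧
    h = ppr φ l * PushoutI.of i a
  have hQ : ∃ n, Q n := by
    obtain ⟨l, hl⟩ := push_exists_list h
    exact ⟨_, l, 1, rfl, by simpa using hl⟩
  obtain ⟨l, a, hl, hx⟩ := Nat.find_spec hQ
  have hmin : ∀ m, Q m → Nat.find hQ ≤ m := fun m hm => Nat.find_min' hQ hm
  generalize Nat.find hQ = m at hl hmin
  obtain ⟨a', ha'⟩ := hh
  -- letters are not in the base
  have hmerge : ∀ (l₁ l₂ : List (Σ i, G i)) (y z : Σ i, G i), l ++ [(⟨i, a⟩ : Σ i, G i)] =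
      l₁ ++ y :: z :: l₂ → y.1 ≠ z.1 := by
    rintro l₁ l₂ ⟨j, y⟩ ⟨j', z⟩ he hj
    dsimp at hj
    subst hj
    rcases List.eq_nil_or_concat l₂ with rfl | ⟨l₃, w, hw⟩
    · have he' : l ++ [(⟨i, a⟩ : Σ i, G i)] = (l₁ ++ [⟨j, y⟩]) ++ [⟨j, z⟩] := by rw [he]; simp
      obtain ⟨e1, e2⟩ := List.append_inj' he' rfl
      simp only [List.cons.injEq, and_true] at e2
      obtain ⟨rfl, e3⟩ := Sigma.mk.inj e2
      have e3 := eq_of_heq e3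
      subst e3
      have := hmin l₁.length ⟨l₁, y * a, rfl, by
        rw [hx, e1, ppr_append]; simp [ppr, mul_assoc]⟩
      rw [e1] at hl; simp at hl; omega
    · rw [List.concat_eq_append] at hw
      subst hw
      have he' : l ++ [(⟨i, a⟩ : Σ i, G i)] = (l₁ ++ ⟨j, y⟩ :: ⟨j, z⟩ :: l₃) ++ [w] := by
        rw [he]; simp
      obtain ⟨e1, e2⟩ := List.append_inj' he' rfl
      have := hmin (l₁ ++ ⟨j, y * z⟩ :: l₃).length ⟨l₁ ++ ⟨j, y * z⟩ :: l₃, a, rfl, by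
        rw [hx, e1]; simp only [ppr_append, ppr_cons]; simp [mul_assoc]⟩
      rw [e1] at hl; simp at hl this; omega
  have hch0 : (l ++ [(⟨i, a⟩ : Σ i, G i)]).IsChain (fun a b => a.1 ≠ b.1) := by
    rw [List.isChain_iff_forall_rel_of_append_cons_cons]
    intro y z l₁ l₂ he
    exact hmerge l₁ l₂ y z he
  have hne : ∀ y ∈ l, y.2 ∉ (φ y.1).range := by
    rintro y hy ⟨b, hb⟩
    obtain ⟨l₁, l₂, rfl⟩ := List.append_of_mem hy
    cases l₂ with
    | nil =>
      have := hmin l₁.length ⟨l₁, φ i b * a, rfl, by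
        rw [hx, ppr_append, ppr_cons, ← hb]
        simp [ppr, PushoutI.of_apply_eq_base, mul_assoc]⟩
      simp at hl; omega
    | cons z l₂ =>
      have := hmin (l₁ ++ ⟨z.1, φ z.1 b * z.2⟩ :: l₂).length
        ⟨l₁ ++ ⟨z.1, φ z.1 b * z.2⟩ :: l₂, a, rfl, by
          rw [hx]
          simp only [ppr_append, ppr_cons, ← hb, map_mul, PushoutI.of_apply_eq_base, mul_assoc]⟩
      simp at hl this; omega
  have hg' : a * g * a⁻¹ ∉ (φ i).range := hg a
  have hch : (l ++ [(⟨i, a * g * a⁻¹⟩ : Σ i, G i)]).IsChain (fun a b => a.1 ≠ b.1) := by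
    rw [List.isChain_append] at hch0 ⊢
    refine ⟨hch0.1, List.isChain_singleton _, ?_⟩
    intro x hx y hy
    simp only [List.head?_cons, Option.mem_def, Option.some.injEq] at hy
    subst hy
    exact hch0.2.2 x hx ⟨i, a⟩ rfl
  have heq : ppr φ l * PushoutI.of i (a * g * a⁻¹) * (ppr φ l)⁻¹ = PushoutI.of i a' := by
    rw [ha', hx]; simp [mul_assoc]
  cases l with
  | nil => exact ⟨a, by rw [hx]; simp [ppr]⟩
  | cons y l =>
    exfalso
    by_cases hy : i = y.1
    · obtain ⟨j, y⟩ := y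
      dsimp at hy
      subst hy
      have hl0 : l ≠ [] := by
        rintro rfl
        simp at hch
      refine push_claim hφ i l _ hg' (fun z hz => hne z (List.mem_cons_of_mem _ hz)) ?_ ?_ hl0
        (y⁻¹ * a' * y) ?_
      · rw [List.cons_append, List.isChain_cons] at hch
        exact hch.2
      · intro z hz
        rw [List.cons_append, List.isChain_cons] at hch
        apply hch.1 z
        rw [List.head?_append_of_ne_nil _ hl0]
        exact hz
      · rw [ppr_cons] at heq
        have e : PushoutI.of (φ := φ) i (y⁻¹ * a' * y) =
            (PushoutI.of i y)⁻¹ * PushoutI.of i a' * PushoutI.of i y := by simp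
        rw [e, ← heq]
        group
    · exact push_claim hφ i (y :: l) _ hg' hne hch (by simpa using hy) (by simp) a' heq

end Push

/-- Adjoining a root to an element of infinite order. -/
lemma adjoin_root {Γ : Type} [Group Γ] (b : Γ) (hb : ∀ j : ℤ, b ^ j = 1 → j = 0) (p : ℤ)
    (hp : p ≠ 0) :
    ∃ (P : Type) (_ : Group P) (ι : Γ →* P) (x : P), Function.Injective ι ∧ x ^ p = ι b ∧
      (∀ g : Γ, (∀ (c : Γ) (j : ℤ), c * g * c⁻¹ ≠ b ^ j) → ∀ h : P,
        h * ι g * h⁻¹ ∈ ι.range → h ∈ ι.range) ∧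
      (∀ (Q : Type) (_ : Group Q) (f : Γ →* Q) (y : Q), y ^ p = f b →
        ∃ F : P →* Q, (∀ g, F (ι g) = f g) ∧ F x = y) := by
  let G : Bool → Type := fun i => match i with
    | true => Γ
    | false => Multiplicative ℤ
  letI inst : ∀ i, Group (G i) := fun i => match i with
    | true => inferInstanceAs (Group Γ)
    | false => inferInstanceAs (Group (Multiplicative ℤ))
  let φ : ∀ i, Multiplicative ℤ →* G i := fun i => match i with
    | true => zpowersHom Γ b
    | false => zpowersHom (Multiplicative ℤ) (Multiplicative.ofAdd p)
  have hφ : ∀ i, Function.Injective (φ i) := by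
    rintro (_ | _)
    · show Function.Injective (zpowersHom (Multiplicative ℤ) (Multiplicative.ofAdd p))
      rw [injective_iff_map_eq_one]
      intro a ha
      rw [zpowersHom_apply, ← ofAdd_zsmul] at ha
      have h2 : (Multiplicative.toAdd a) * p = 0 := by simpa using ha
      have := (mul_eq_zero.1 h2).resolve_right hp
      simpa using this
    · show Function.Injective (zpowersHom Γ b)
      rw [injective_iff_map_eq_one]
      intro a ha
      rw [zpowersHom_apply] at ha
      simpa using hb _ ha
  refine ⟨Monoid.PushoutI φ, inferInstance, Monoid.PushoutI.of (φ := φ) true,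
    Monoid.PushoutI.of (φ := φ) false (Multiplicative.ofAdd (1 : ℤ)),
    Monoid.PushoutI.of_injective hφ true, ?_, ?_, ?_⟩
  · have e1 := Monoid.PushoutI.of_apply_eq_base φ true (Multiplicative.ofAdd (1 : ℤ))
    have e2 := Monoid.PushoutI.of_apply_eq_base φ false (Multiplicative.ofAdd (1 : ℤ))
    have e3 : φ true (Multiplicative.ofAdd (1 : ℤ)) = b := by
      show zpowersHom Γ b _ = b
      simp
    have e4 : φ false (Multiplicative.ofAdd (1 : ℤ)) = 
        (show G false from (Multiplicative.ofAdd (1 : ℤ))) ^ p := by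
      show zpowersHom (Multiplicative ℤ) (Multiplicative.ofAdd p) (Multiplicative.ofAdd (1 : ℤ)) =
        (Multiplicative.ofAdd (1 : ℤ)) ^ p
      simp [← ofAdd_zsmul]
    rw [e3] at e1
    rw [e4, map_zpow] at e2
    rw [e1]; exact e2
  · intro g hg h hh
    refine push_malnormal hφ true g ?_ h hh
    rintro c ⟨j, hj⟩
    apply hg c (Multiplicative.toAdd j)
    rw [← hj]
    show zpowersHom Γ b j = _
    simp
  · intro Q _ f y hy
    let F : ∀ i, G i →* Q := fun i => match i with
      | true => f
      | false => zpowersHom Q y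
    refine ⟨Monoid.PushoutI.lift F (zpowersHom Q (f b)) ?_, ?_, ?_⟩
    · rintro (_ | _)
      · show (zpowersHom Q y).comp (zpowersHom (Multiplicative ℤ) (Multiplicative.ofAdd p)) = _
        ext
        simp [hy]
      · show f.comp (zpowersHom Γ b) = _
        ext
        simp
    · intro g
      exact Monoid.PushoutI.lift_of (i := true) F _ _ g
    · refine (Monoid.PushoutI.lift_of (i := false) F _ _ _).trans ?_
      show zpowersHom Q y _ = y
      simp
end KMS

namespace KMS
open FreeGroup (of)

lemma hnn_abs {Γ K : Type} [Group Γ] [Group K] (f1 f2 : K →* Γ) (h1 : Function.Injective f1)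
    (h2 : Function.Injective f2) :
    ∃ (P : Type) (_ : Group P) (ι : Γ →* P) (τ : P), Function.Injective ι ∧
      (∀ k, τ * ι (f1 k) = ι (f2 k) * τ) ∧
      (∀ (x : P) (n : ℕ), 0 < n → x ^ n = 1 → ∃ c g, x = c * ι g * c⁻¹) ∧
      (∀ (Q : Type) (_ : Group Q) (f : Γ →* Q) (y : Q), (∀ k, y * f (f1 k) = f (f2 k) * y) →
        ∃ F : P →* Q, (∀ g, F (ι g) = f g) ∧ F τ = y) := by
  let φ : f1.range ≃* f2.range := (MonoidHom.ofInjective h1).symm.trans (MonoidHom.ofInjective h2)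
  have hφ : ∀ k, φ (MonoidHom.ofInjective h1 k) = MonoidHom.ofInjective h2 k := by
    intro k; simp [φ]
  refine ⟨HNNExtension Γ f1.range f2.range φ, inferInstance, HNNExtension.of, HNNExtension.t,
    HNNExtension.of_injective φ, ?_, ?_, ?_⟩
  · intro k
    have := HNNExtension.t_mul_of (φ := φ) (MonoidHom.ofInjective h1 k)
    rw [hφ] at this
    exact this
  · intro x n hn hx
    exact hnn_torsion x n hn hx
  · intro Q _ f y hy
    refine ⟨HNNExtension.lift f y ?_, ?_, ?_⟩
    · intro a
      obtain ⟨k, rfl⟩ := (MonoidHom.ofInjective h1).surjective a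
      rw [hφ]
      exact hy k
    · intro g; simp
    · simp

lemma Kset_hom {α G : Type} [Group G] {X : Set α} (f : FreeGroup α →* G) (K : Subgroup G)
    (h : ∀ x ∈ X, f (FreeGroup.of x) ∈ K) : ∀ u ∈ Kset X, f u ∈ K := by
  intro u hu
  have : Kset X ≤ K.comap f := by
    rw [Subgroup.closure_le]
    rintro _ ⟨x, hx, rfl⟩
    exact h x hx
  exact this hu

lemma Kset_eq {α G : Type} [Group G] {X : Set α} (f g : FreeGroup α →* G)
    (h : ∀ x ∈ X, f (FreeGroup.of x) = g (FreeGroup.of x)) : ∀ u ∈ Kset X, f u = g u := by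
  intro u hu
  have := MonoidHom.eqOn_closure (f := f) (g := g) (s := FreeGroup.of '' X) (by
    rintro _ ⟨x, hx, rfl⟩
    exact h x hx)
  exact this hu

lemma of_mem_Kset {α : Type} {X : Set α} {x : α} (h : x ∈ X) : FreeGroup.of x ∈ Kset X :=
  Subgroup.subset_closure ⟨x, h, rfl⟩

lemma Kset_mono {α : Type} {X Y : Set α} (h : X ⊆ Y) : Kset X ≤ Kset Y :=
  Subgroup.closure_mono (Set.image_mono h)

lemma NC_self {G : Type} [Group G] (r : G) : r ∈ NC r :=
  Subgroup.subset_normalClosure rfl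

lemma NC_hom {G H : Type} [Group G] [Group H] (f : G →* H) (r : G) (N : Subgroup H) [N.Normal]
    (h : f r ∈ N) : ∀ u ∈ NC r, f u ∈ N := by
  intro u hu
  have : NC r ≤ N.comap f := Subgroup.normalClosure_le_normal (by simpa using h)
  exact this hu

lemma NC_ker {G H : Type} [Group G] [Group H] (f : G →* H) (r : G) 
    (h : f r = 1) : ∀ u ∈ NC r, f u = 1 := by
  intro u hu
  simpa using NC_hom f r ⊥ (by simpa using h) u hu

lemma NC_conj {G : Type} [Group G] (c r : G) : NC (c * r * c⁻¹) = NC r := by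
  apply le_antisymm
  · intro u hu
    exact NC_hom (MonoidHom.id G) _ (NC r) 
      (Subgroup.normalClosure_normal.conj_mem _ (NC_self r) c) u hu
  · intro u hu
    refine NC_hom (MonoidHom.id G) _ (NC (c * r * c⁻¹)) ?_ u hu
    have := (Subgroup.normalClosure_normal (s := {c * r * c⁻¹})).conj_mem _ 
      (NC_self (c * r * c⁻¹)) c⁻¹
    convert this using 1
    show r = _
    group

section Theta
variable {α : Type}

/-- The rewriting homomorphism. -/
def th (t : α) : FreeGroup ({s : α // s ≠ t} × ℤ) →* FreeGroup α :=
  FreeGroup.lift (fun p => of t ^ p.2 * of p.1.1 * (of t ^ p.2)⁻¹)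

/-- The shift. -/
def sh {S : Type} (n : ℤ) : FreeGroup (S × ℤ) →* FreeGroup (S × ℤ) :=
  FreeGroup.map (fun p => (p.1, p.2 + n))

lemma th_of (t : α) (s : {s : α // s ≠ t}) (i : ℤ) :
    th t (of (s, i)) = of t ^ i * of s.1 * (of t ^ i)⁻¹ := by simp [th]

lemma sh_of {S : Type} (n : ℤ) (s : S) (i : ℤ) : sh n (of (s, i)) = of (s, i + n) := by simp [sh]

lemma th_sh (t : α) (n : ℤ) (u : FreeGroup ({s : α // s ≠ t} × ℤ)) :
    th t (sh n u) = of t ^ n * th t u * (of t ^ n)⁻¹ := by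
  have : (th t).comp (sh n) = (MulAut.conj (of t ^ n)).toMonoidHom.comp (th t) := by
    ext p
    obtain ⟨s, i⟩ := p
    simp only [MonoidHom.comp_apply, sh_of, th_of]
    simp only [MulEquiv.toMonoidHom_eq_coe, MonoidHom.coe_coe, MulAut.conj_apply]
    rw [add_comm, zpow_add]
    group
  exact DFunLike.congr_fun this u

lemma sh_sh {S : Type} (m n : ℤ) (u : FreeGroup (S × ℤ)) : sh m (sh n u) = sh (n + m) u := by
  have : (sh m).comp (sh n) = sh (S := S) (n + m) := by
    ext p
    obtain ⟨s, i⟩ := p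
    simp [sh_of, add_assoc]
  exact DFunLike.congr_fun this u

lemma sh_zero {S : Type} (u : FreeGroup (S × ℤ)) : sh 0 u = u := by
  have : sh 0 = MonoidHom.id (FreeGroup (S × ℤ)) := by
    ext p
    obtain ⟨s, i⟩ := p
    simp [sh_of]
  exact DFunLike.congr_fun this u

lemma sh_inj {S : Type} (n : ℤ) : Function.Injective (sh (S := S) n) := by
  intro u v h
  have := congrArg (sh (-n)) h
  simpa [sh_sh, sh_zero] using this

theorem zlemma (t : α) (r : FreeGroup ({s : α // s ≠ t} × ℤ)) (a : {s : α // s ≠ t}) (M : ℤ)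
    (hM0 : 0 ≤ M) (h0 : Ess r (a, 0)) (hM : Ess r (a, M))
    (hr : r ∈ Kset {p | p.1 = a → 0 ≤ p.2 ∧ p.2 ≤ M}) (hF : Frei r) :
    (∀ u ∈ Kset {p : {s : α // s ≠ t} × ℤ | p.1 = a → 0 ≤ p.2 ∧ p.2 ≤ M},
      th t u ∈ NC (th t r) → u ∈ NC r) ∧
    (∀ (g : FreeGroup α) (n : ℕ), 0 < n → g ^ n ∈ NC (th t r) →
      ∃ c u, g⁻¹ * (c * th t u * c⁻¹) ∈ NC (th t r) ∧ u ^ n ∈ NC r) := by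
  classical
  let XA : Set ({s : α // s ≠ t} × ℤ) := {p | p.1 = a → 0 ≤ p.2 ∧ p.2 < M}
  let q := QuotientGroup.mk' (NC r)
  let f1 : Kset XA →* _ := q.comp (Kset XA).subtype
  let f2 : Kset XA →* _ := q.comp ((sh 1).comp (Kset XA).subtype)
  have h1 : Function.Injective f1 := by
    rw [injective_iff_map_eq_one]
    rintro ⟨u, hu⟩ h
    have h' : u ∈ NC r := (QuotientGroup.eq_one_iff u).1 h
    have hu' : u ∈ Kset {x | x ≠ (a, M)} := by
      refine Kset_mono ?_ hu
      rintro p hp rfl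
      have := hp rfl
      simp at this
    exact Subtype.ext (hF _ hM u hu' h')
  have h2 : Function.Injective f2 := by
    rw [injective_iff_map_eq_one]
    rintro ⟨u, hu⟩ h
    have h' : sh 1 u ∈ NC r := (QuotientGroup.eq_one_iff (sh 1 u)).1 h
    have hu' : sh 1 u ∈ Kset {x | x ≠ (a, 0)} := by
      refine Kset_hom _ _ ?_ u hu
      rintro ⟨s, i⟩ hp
      rw [sh_of]
      apply of_mem_Kset
      intro h
      simp only [Prod.mk.injEq] at h
      have := hp h.1
      dsimp at this
      omega
    have := hF _ h0 _ hu' h'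
    apply Subtype.ext
    apply sh_inj 1
    rw [this]; simp
  obtain ⟨P, _, ι, τ, hι, hτ, htor, huniv⟩ := hnn_abs f1 f2 h1 h2
  have hτ' : ∀ u ∈ Kset XA, τ * ι (q u) * τ⁻¹ = ι (q (sh 1 u)) := by
    intro u hu
    have := hτ ⟨u, hu⟩
    rw [mul_inv_eq_iff_eq_mul]
    exact this
  let f : FreeGroup α →* P := FreeGroup.lift (fun s => if h : s = t then τ else ι (q (of (⟨s, h⟩, 0))))
  have ft : f (of t) = τ := by simp [f]
  have fs : ∀ s : {s : α // s ≠ t}, f (of s.1) = ι (q (of (s, 0))) := by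
    intro s; simp [f, s.2]
  have hfth : ∀ u ∈ Kset {p : {s : α // s ≠ t} × ℤ | p.1 = a → 0 ≤ p.2 ∧ p.2 ≤ M},
      (f.comp (th t)) u = (ι.comp q) u := by
    apply Kset_eq
    rintro ⟨s, i⟩ hp
    simp only [MonoidHom.comp_apply, th_of, map_mul, map_inv, map_zpow, ft, fs]
    simp only [Set.mem_ofPred_eq] at hp
    induction i using Int.induction_on with
    | zero => simp
    | succ i ih =>
      have ih' := ih (fun h => by have := hp h; omega)
      have := hτ' (of (s, (i : ℤ))) (of_mem_Kset (fun h => by have := hp h; dsimp at this ⊢; omega))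
      rw [sh_of] at this
      rw [← this, ← ih']
      rw [add_comm (i : ℤ) 1, zpow_add]
      group
    | pred i ih =>
      have hsa : s ≠ a := fun h => by have := hp h; omega
      have ih' := ih (fun h => absurd h hsa)
      have := hτ' (of (s, (-(i : ℤ) - 1))) (of_mem_Kset (fun h => absurd h hsa))
      rw [sh_of, sub_add_cancel, ← ih'] at this
      have e : ι (q (of (s, -(i:ℤ) - 1))) = τ⁻¹ * (τ * ι (q (of (s, -(i:ℤ) - 1))) * τ⁻¹) * τ := by
        group
      rw [e, this, sub_eq_add_neg, add_comm, zpow_add]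
      group
  have hfr : f (th t r) = 1 := by
    have := hfth r hr
    simp only [MonoidHom.comp_apply] at this
    rw [this]
    have h3 : q r = 1 := (QuotientGroup.eq_one_iff r).2 (NC_self r)
    rw [h3, map_one]
  have hfN := NC_ker f (th t r) hfr
  let q' := QuotientGroup.mk' (NC (th t r))
  let θq : FreeGroup ({s : α // s ≠ t} × ℤ) ⧸ NC r →* FreeGroup α ⧸ NC (th t r) :=
    QuotientGroup.lift (NC r) (q'.comp (th t)) (NC_ker (q'.comp (th t)) r
      ((QuotientGroup.eq_one_iff (th t r)).2 (NC_self _)))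
  have hθq : ∀ u, θq (q u) = q' (th t u) := fun u => rfl
  obtain ⟨g, hg1, hg2⟩ := huniv _ inferInstance θq (q' (of t)) (by
    rintro ⟨u, hu⟩
    show q' (of t) * θq (q u) = θq (q (sh 1 u)) * q' (of t)
    rw [hθq, hθq, th_sh, ← map_mul, ← map_mul]
    congr 1
    group)
  have hgf : ∀ u, g (f u) = q' u := by
    have : g.comp f = q' := by
      ext s
      by_cases hs : s = t
      · subst hs
        simp only [MonoidHom.comp_apply, ft, hg2]
      · have := fs ⟨s, hs⟩
        dsimp at this
        simp only [MonoidHom.comp_apply, this, hg1, hθq, th_of]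
        simp
    exact fun u => DFunLike.congr_fun this u
  refine ⟨?_, ?_⟩
  · intro u hu hN
    have e := hfth u hu
    simp only [MonoidHom.comp_apply] at e
    rw [hfN _ hN] at e
    have := hι (e.symm.trans (map_one ι).symm)
    exact (QuotientGroup.eq_one_iff u).1 this
  · intro x n hn hx
    obtain ⟨c, y, hcy⟩ := htor (f x) n hn (by rw [← map_pow]; exact hfN _ hx)
    obtain ⟨u, rfl⟩ := QuotientGroup.mk'_surjective (NC r) y
    obtain ⟨d, hd⟩ := QuotientGroup.mk'_surjective (NC (th t r)) (g c)
    refine ⟨d, u, ?_, ?_⟩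
    · rw [← QuotientGroup.eq]
      show q' x = q' (d * th t u * d⁻¹)
      rw [← hgf x, hcy, map_mul, map_mul, map_mul, map_mul, map_inv, map_inv, hd]
      congr 2
      exact hg1 (q u)
    · have : (f x) ^ n = 1 := by rw [← map_pow]; exact hfN _ hx
      rw [hcy, conj_pow] at this
      have h4 : ι (q u) ^ n = 1 := by
        rw [mul_inv_eq_one] at this
        exact mul_left_cancel (this.trans (mul_one c).symm)
      rw [← map_pow, ← map_pow] at h4
      exact (QuotientGroup.eq_one_iff _).1 (hι (h4.trans (map_one ι).symm))

end Theta
end KMS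

namespace KMS
open FreeGroup (of)

/-- Freiheitssatz at a letter. -/
def FreiAt {α : Type} (r : FreeGroup α) (s : α) : Prop :=
  ∀ u ∈ Kset {x | x ≠ s}, u ∈ NC r → u = 1

/-- Orders of roots. -/
def Ordd {α : Type} (r : FreeGroup α) : Prop :=
  r ≠ 1 → ∀ (V : FreeGroup α) (k j : ℕ), 0 < k → V ^ k = r → V ^ j ∈ NC r → k ∣ j

/-- All claims. -/
def Good {α : Type} (r : FreeGroup α) : Prop := Frei r ∧ Tors r ∧ Ordd r

lemma FreiAt_conj {α : Type} (c r : FreeGroup α) (s : α) (h : FreiAt (c * r * c⁻¹) s) :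
    FreiAt r s := by
  unfold FreiAt at h
  rwa [NC_conj] at h

lemma Ess_conj {α : Type} (c r : FreeGroup α) (s : α) (h : Ess r s) : Ess (c * r * c⁻¹) s := by
  intro g hg
  apply h (g * c)
  convert hg using 1
  group

lemma Tors_conj {α : Type} (c r : FreeGroup α) (h : Tors (c * r * c⁻¹)) : Tors r := by
  intro g n hn hg
  rw [← NC_conj c r] at hg
  obtain ⟨h', w, hw, hN⟩ := h g n hn hg
  refine ⟨h' * c, c⁻¹ * w * c, ?_, ?_⟩
  · have := hw.eq
    show c⁻¹ * w * c * r = r * (c⁻¹ * w * c)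
    calc c⁻¹ * w * c * r = c⁻¹ * (w * (c * r * c⁻¹)) * c := by group
      _ = c⁻¹ * ((c * r * c⁻¹) * w) * c := by rw [this]
      _ = _ := by group
  · rw [NC_conj] at hN
    convert hN using 1
    group

lemma Ordd_conj {α : Type} (c r : FreeGroup α) (h : Ordd (c * r * c⁻¹)) : Ordd r := by
  intro hr V k j hk hV hj
  have hne : c * r * c⁻¹ ≠ 1 := by
    intro h
    apply hr
    simpa using h
  refine h hne (c * V * c⁻¹) k j hk (by rw [conj_pow, hV]) ?_
  rw [NC_conj, conj_pow]
  exact Subgroup.normalClosure_normal.conj_mem _ hj c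

lemma Good_conj {α : Type} (c r : FreeGroup α) (h : Good (c * r * c⁻¹)) : Good r :=
  ⟨fun s hs => FreiAt_conj c r s (h.1 s (Ess_conj c r s hs)), Tors_conj c r h.2.1,
    Ordd_conj c r h.2.2⟩

lemma Good_one {α : Type} : Good (1 : FreeGroup α) := by
  refine ⟨?_, ?_, ?_⟩
  · intro s hs
    exact absurd (by simp) (hs 1)
  · intro g n hn hg
    have h1 : g ^ n = 1 := NC_ker (MonoidHom.id _) 1 rfl _ hg
    have : g = 1 := by
      exact (pow_left_injective hn.ne') (by simpa using h1)
    subst this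
    exact ⟨1, 1, Commute.one_left _, by simp⟩
  · intro h; exact absurd rfl h

lemma root_mem_Kset {α : Type} (X : Set α) (V : FreeGroup α) (k : ℕ) (hk : 0 < k)
    (h : V ^ k ∈ Kset X) : V ∈ Kset X := by
  classical
  let ρ : FreeGroup α →* FreeGroup α := FreeGroup.lift (fun x => if x ∈ X then of x else 1)
  have h1 : ∀ u ∈ Kset X, ρ u = (MonoidHom.id _) u := by
    apply Kset_eq
    intro x hx
    simp [ρ, hx]
  have h2 : ∀ u ∈ Kset (Set.univ : Set α), ρ u ∈ Kset X := by
    apply Kset_hom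
    intro x _
    by_cases hx : x ∈ X
    · simpa [ρ, hx] using of_mem_Kset hx
    · simp [ρ, hx]
  have h3 : ρ V = V := by
    apply pow_left_injective hk.ne'
    dsimp only
    rw [← map_pow]
    exact h1 _ h
  rw [← h3]
  apply h2
  simp [Kset, FreeGroup.closure_range_of]

/-- exponent sum -/
noncomputable def ex {α : Type} (s : α) : FreeGroup α →* Multiplicative ℤ :=
  letI := Classical.decEq α
  FreeGroup.lift (fun x => if x = s then Multiplicative.ofAdd 1 else 1)

lemma ex_self {α : Type} (s : α) : ex s (of s) = Multiplicative.ofAdd 1 := by simp [ex]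
lemma ex_ne {α : Type} {s x : α} (h : x ≠ s) : ex s (of x) = 1 := by simp [ex, h]

lemma ex_Kset {α : Type} (s : α) (u : FreeGroup α) (h : u ∈ Kset {x | x ≠ s}) : ex s u = 1 := by
  have := Kset_hom (ex s) ⊥ (X := {x | x ≠ s}) (fun x hx => by simpa using ex_ne hx) u h
  simpa using this

lemma Ess_of_ex {α : Type} (s : α) (r : FreeGroup α) (h : ex s r ≠ 1) : Ess r s := by
  intro g hg
  apply h
  have := ex_Kset s _ hg
  simpa using this

section Theta
variable {α : Type}

lemma ex_th (t : α) (u : FreeGroup ({s : α // s ≠ t} × ℤ)) : ex t (th t u) = 1 := by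
  have : (ex t).comp (th t) = 1 := by
    ext ⟨s, i⟩
    simp [th_of, ex_ne s.2]
  exact DFunLike.congr_fun this u

/-- shift action -/
def shA (S : Type) : Multiplicative ℤ →* MulAut (FreeGroup (S × ℤ)) where
  toFun n :=
    { toFun := sh n.toAdd
      invFun := sh (-n.toAdd)
      left_inv := fun u => by simp [sh_sh, sh_zero]
      right_inv := fun u => by simp [sh_sh, sh_zero]
      map_mul' := fun x y => map_mul _ x y }
  map_one' := by
    ext1 u
    exact sh_zero u
  map_mul' m n := by
    ext1 u
    show sh (m * n).toAdd u = sh m.toAdd (sh n.toAdd u)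
    rw [sh_sh, toAdd_mul, add_comm]

lemma th_inj (t : α) : Function.Injective (th t) := by
  classical
  let Φ : FreeGroup α →* FreeGroup ({s : α // s ≠ t} × ℤ) ⋊[shA {s : α // s ≠ t}] Multiplicative ℤ :=
    FreeGroup.lift (fun s => if h : s = t then SemidirectProduct.inr (Multiplicative.ofAdd 1)
      else SemidirectProduct.inl (of (⟨s, h⟩, 0)))
  have h1 : Φ (of t) = SemidirectProduct.inr (Multiplicative.ofAdd 1) := by simp [Φ]
  have h2 : ∀ s : {s : α // s ≠ t}, Φ (of s.1) = SemidirectProduct.inl (of (s, 0)) := by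
    intro s; simp [Φ, s.2]
  have : Φ.comp (th t) = SemidirectProduct.inl := by
    ext1 ⟨s, i⟩
    simp only [MonoidHom.comp_apply, th_of, map_mul, map_inv, map_zpow, h1, h2]
    rw [← map_zpow, ← map_inv, ← SemidirectProduct.inl_aut]
    congr 1
    show sh ((Multiplicative.ofAdd (1 : ℤ)) ^ i).toAdd (of (s, 0)) = _
    rw [sh_of]
    simp
  intro u v huv
  have h3 := congrArg Φ huv
  have hu := DFunLike.congr_fun this u
  have hv := DFunLike.congr_fun this v
  simp only [MonoidHom.comp_apply] at hu hv
  rw [hu, hv] at h3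
  exact SemidirectProduct.inl_injective h3

lemma th_mul (t : α) (u v) (m n : ℤ) : th t u * of t ^ m * (th t v * of t ^ n) =
    th t (u * sh m v) * of t ^ (m + n) := by
  rw [map_mul, th_sh, zpow_add]
  group

lemma th_dec (t : α) (Y : Set α) (hY : t ∈ Y) (g : FreeGroup α) (hg : g ∈ Kset Y) :
    ∃ u ∈ Kset {p : {s : α // s ≠ t} × ℤ | p.1.1 ∈ Y}, ∃ m : ℤ, g = th t u * of t ^ m := by
  have hsh : ∀ m : ℤ, ∀ u ∈ Kset {p : {s : α // s ≠ t} × ℤ | p.1.1 ∈ Y},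
      sh m u ∈ Kset {p : {s : α // s ≠ t} × ℤ | p.1.1 ∈ Y} := by
    intro m
    apply Kset_hom
    rintro ⟨s, i⟩ h
    rw [sh_of]
    exact of_mem_Kset h
  induction hg using Subgroup.closure_induction with
  | mem x hx =>
    obtain ⟨s, hs, rfl⟩ := hx
    by_cases h : s = t
    · subst h
      exact ⟨1, one_mem _, 1, by simp⟩
    · exact ⟨of (⟨s, h⟩, 0), of_mem_Kset hs, 0, by simp [th_of]⟩
  | one => exact ⟨1, one_mem _, 0, by simp⟩
  | mul x y _ _ hx hy =>
    obtain ⟨u, hu, m, rfl⟩ := hx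
    obtain ⟨v, hv, n, rfl⟩ := hy
    exact ⟨_, mul_mem hu (hsh m v hv), _, th_mul t u v m n⟩
  | inv x _ hx =>
    obtain ⟨u, hu, m, rfl⟩ := hx
    refine ⟨sh (-m) u⁻¹, hsh _ _ (inv_mem hu), -m, ?_⟩
    rw [th_sh, map_inv]
    group

lemma th_dec0 (t : α) (Y : Set α) (hY : t ∈ Y) (g : FreeGroup α) (hg : g ∈ Kset Y)
    (he : ex t g = 1) :
    ∃ u ∈ Kset {p : {s : α // s ≠ t} × ℤ | p.1.1 ∈ Y}, g = th t u := by
  obtain ⟨u, hu, m, rfl⟩ := th_dec t Y hY g hg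
  rw [map_mul, ex_th, map_zpow, ex_self, one_mul, ← ofAdd_zsmul] at he
  have : m = 0 := by simpa using he
  subst this
  exact ⟨u, hu, by simp⟩

lemma key_core (t : α) (r : FreeGroup ({s : α // s ≠ t} × ℤ)) (a : {s : α // s ≠ t}) (M : ℤ)
    (hM0 : 0 ≤ M) (h0 : Ess r (a, 0)) (hM : Ess r (a, M))
    (hr : r ∈ Kset {p | p.1 = a → 0 ≤ p.2 ∧ p.2 ≤ M}) (hG : Good r) :
    Tors (th t r) ∧ Ordd (th t r) ∧ FreiAt (th t r) a.1 ∧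
    ((∃ b, ∃ i : ℤ, i ≠ 0 ∧ Ess r (b, i)) → FreiAt (th t r) t) := by
  obtain ⟨hA, hB⟩ := zlemma t r a M hM0 h0 hM hr hG.1
  refine ⟨?_, ?_, ?_, ?_⟩
  · intro g n hn hg
    obtain ⟨c, u, h1, h2⟩ := hB g n hn hg
    obtain ⟨h, w, hw, hN⟩ := hG.2.1 u n hn h2
    refine ⟨c * th t h, th t w, hw.map (th t), ?_⟩
    have h3 := NC_hom (th t) r (NC (th t r)) (NC_self _) _ hN
    have h4 := (Subgroup.normalClosure_normal (s := {th t r})).conj_mem _ h3 c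
    have h5 := mul_mem h1 h4
    convert h5 using 1
    simp only [map_mul, map_inv]
    group
  · intro hne V k j hk hV hj
    have hex : ex t V = 1 := by
      have h1 : ex t V ^ k = 1 := by rw [← map_pow, hV, ex_th]
      exact pow_left_injective hk.ne' (by simpa using h1)
    obtain ⟨V', _, rfl⟩ := th_dec0 t Set.univ trivial V (by simp [Kset, FreeGroup.closure_range_of]) hex
    rw [← map_pow] at hV hj
    have hV' := th_inj t hV
    have hr1 : r ≠ 1 := by rintro rfl; exact hne (map_one _)
    refine hG.2.2 hr1 V' k j hk hV' (hA _ ?_ hj)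
    apply pow_mem
    apply root_mem_Kset _ _ k hk
    rw [hV']; exact hr
  · intro u hu hN
    have hex : ex t u = 1 := NC_ker (ex t) _ (ex_th t r) u hN
    obtain ⟨u', hu', rfl⟩ := th_dec0 t _ (show t ∈ {x | x ≠ a.1} from a.2.symm) u hu hex
    have h1 : u' ∈ NC r := by
      apply hA _ _ hN
      refine Kset_mono ?_ hu'
      intro p hp h
      exact absurd (congrArg Subtype.val h) hp
    have h2 : u' = 1 := by
      refine hG.1 _ h0 u' (Kset_mono ?_ hu') h1
      rintro p hp rfl
      exact hp rfl
    rw [h2, map_one]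
  · rintro ⟨b, i, hi, hb⟩ u hu hN
    have hu' : ∃ u' ∈ Kset {p : {s : α // s ≠ t} × ℤ | p.2 = 0}, th t u' = u := by
      have := Kset_hom (MonoidHom.id _) ((Kset {p : {s : α // s ≠ t} × ℤ | p.2 = 0}).map (th t))
        (X := {x | x ≠ t}) (fun x hx => ⟨of (⟨x, hx⟩, 0), of_mem_Kset rfl, by simp [th_of]⟩) u hu
      exact this
    obtain ⟨u', hu', rfl⟩ := hu'
    have h1 : u' ∈ NC r := by
      apply hA _ _ hN
      refine Kset_mono ?_ hu'
      intro p hp h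
      have : p.2 = 0 := hp
      omega
    have h2 : u' = 1 := by
      refine hG.1 _ hb u' (Kset_mono ?_ hu') h1
      rintro p hp rfl
      exact hi hp
    rw [h2, map_one]

end Theta
end KMS

namespace KMS
open FreeGroup (of)
section Theta
variable {α : Type}

lemma sh_mk {S : Type} (k : ℤ) (L : List ((S × ℤ) × Bool)) :
    sh k (FreeGroup.mk L) = FreeGroup.mk (L.map (fun x => ((x.1.1, x.1.2 + k), x.2))) := by
  rw [sh, FreeGroup.map.mk]

lemma nm_sh_le {S : Type} (k : ℤ) (u : FreeGroup (S × ℤ)) : nm (sh k u) ≤ nm u := by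
  obtain ⟨L, rfl, hL⟩ := exists_list_nm u
  rw [sh_mk, ← hL]
  exact (nm_mk_le _).trans (by simp)

lemma Ess_sh {S : Type} (k : ℤ) (r : FreeGroup (S × ℤ)) (s : S) (i : ℤ) (h : Ess r (s, i)) :
    Ess (sh k r) (s, i + k) := by
  intro g hg
  apply h (sh (-k) g)
  have := Kset_hom (sh (-k)) (Kset {x | x ≠ (s, i)}) (fun x hx => by
    obtain ⟨s', i'⟩ := x
    rw [sh_of]
    apply of_mem_Kset
    intro h
    apply hx
    simp only [Prod.mk.injEq] at h ⊢
    exact ⟨h.1, by omega⟩) _ hg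
  simpa [sh_sh, sh_zero] using this

lemma key_core2 (t : α) (n : ℕ) (hP : ∀ (β : Type) (r : FreeGroup β), nm r ≤ n → Good r)
    (L : List (({s : α // s ≠ t} × ℤ) × Bool)) (hL : ∀ x ∈ L, Ess (FreeGroup.mk L) x.1)
    (hn : L.length ≤ n) (a : {s : α // s ≠ t}) (ha : ∃ x ∈ L, x.1.1 = a) :
    Tors (th t (FreeGroup.mk L)) ∧ Ordd (th t (FreeGroup.mk L)) ∧
    FreiAt (th t (FreeGroup.mk L)) a.1 ∧
    (Ess (th t (FreeGroup.mk L)) t → FreiAt (th t (FreeGroup.mk L)) t) := by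
  classical
  obtain ⟨z, hz, hza⟩ := ha
  let T := (L.filter (fun x => x.1.1 = a)).toFinset
  have hT : ∀ x, x ∈ T ↔ x ∈ L ∧ x.1.1 = a := by intro x; simp [T]
  have hTn : T.Nonempty := ⟨z, (hT z).2 ⟨hz, hza⟩⟩
  obtain ⟨x, hx, hmin⟩ := T.exists_min_image (fun x => x.1.2) hTn
  obtain ⟨y, hy, hmax⟩ := T.exists_max_image (fun x => x.1.2) hTn
  set k : ℤ := -x.1.2 with hk
  set r := FreeGroup.mk L with hr
  have hc : th t (sh k r) = of t ^ k * th t r * (of t ^ k)⁻¹ := th_sh t k r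
  have hgood : Good (sh k r) := hP _ _ ((nm_sh_le k r).trans ((nm_mk_le L).trans hn))
  obtain ⟨hx1, hx2⟩ := (hT x).1 hx
  obtain ⟨hy1, hy2⟩ := (hT y).1 hy
  have hE : ∀ z ∈ L, Ess (sh k r) (z.1.1, z.1.2 + k) := fun z hz => Ess_sh k r _ _ (hL z hz)
  have key := key_core t (sh k r) a (y.1.2 + k) (by have := hmin y hy; omega)
    (by have := hE x hx1; rw [hx2, hk, add_neg_cancel] at this; exact this)
    (by have := hE y hy1; rw [hy2] at this; exact this)
    (by
      rw [hr, sh_mk]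
      apply mk_mem_Kset
      intro w hw
      rw [List.mem_map] at hw
      obtain ⟨v, hv, rfl⟩ := hw
      intro hva
      dsimp at hva ⊢
      have hvT : v ∈ T := (hT v).2 ⟨hv, hva⟩
      have h1 := hmin v hvT
      have h2 := hmax v hvT
      omega) hgood
  rw [hc] at key
  obtain ⟨k1, k2, k3, k4⟩ := key
  refine ⟨Tors_conj _ _ k1, Ordd_conj _ _ k2, FreiAt_conj _ _ _ k3, ?_⟩
  intro hess
  apply FreiAt_conj _ _ _ (k4 _)
  by_contra hcon
  push Not at hcon
  apply hess (of t ^ k)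
  rw [← hc]
  have h0 : sh k r ∈ Kset {p : {s : α // s ≠ t} × ℤ | p.2 = 0} := by
    rw [hr, sh_mk]
    apply mk_mem_Kset
    intro w hw
    rw [List.mem_map] at hw
    obtain ⟨v, hv, rfl⟩ := hw
    show v.1.2 + k = 0
    by_contra hvk
    exact hcon _ _ hvk (hE v hv)
  refine Kset_hom (th t) _ ?_ _ h0
  rintro ⟨s, i⟩ hi
  have hi : i = 0 := hi
  subst hi
  rw [th_of]
  simpa using of_mem_Kset (X := {x | x ≠ t}) s.2

theorem key (t : α) (n : ℕ) (hP : ∀ (β : Type) (r : FreeGroup β), nm r ≤ n → Good r)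
    (r : FreeGroup ({s : α // s ≠ t} × ℤ)) (hr : nm r ≤ n) : Good (th t r) := by
  obtain ⟨c, L, hc, hlen, hess⟩ := ess_list r
  apply Good_conj (th t c)
  rw [← map_inv, ← map_mul, ← map_mul, ← hc]
  have K := key_core2 t n hP L hess (hlen.trans hr)
  cases hL : L with
  | nil =>
    have : FreeGroup.mk ([] : List (({s : α // s ≠ t} × ℤ) × Bool)) = 1 := rfl
    rw [this, map_one]
    exact Good_one
  | cons z L' =>
    rw [← hL]
    have K1 := K z.1.1 ⟨z, by simp [hL], rfl⟩
    refine ⟨?_, K1.1, K1.2.1⟩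
    intro s hs
    by_cases hst : s = t
    · subst hst
      exact K1.2.2.2 hs
    · have : ∃ x ∈ L, x.1.1 = ⟨s, hst⟩ := by
        by_contra hcon
        push Not at hcon
        apply hs 1
        simp only [one_mul, inv_one, mul_one]
        refine Kset_hom (th t) _ ?_ _ (mk_mem_Kset (X := {p : {s : α // s ≠ t} × ℤ | p.1 ≠ ⟨s, hst⟩}) L hcon)
        rintro ⟨s', i⟩ hs'
        have ht : of t ∈ Kset {x | x ≠ s} := of_mem_Kset (Ne.symm hst)
        rw [th_of]
        refine mul_mem (mul_mem (zpow_mem ht i) (of_mem_Kset ?_)) (inv_mem (zpow_mem ht i))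
        intro h
        exact hs' (Subtype.ext h)
      exact (K _ this).2.2.1

lemma rewr (t : α) (ψ : FreeGroup α →* FreeGroup α) (p : ℤ) (q : α → ℤ)
    (ht : ψ (of t) = of t ^ p) (hs : ∀ s, s ≠ t → ψ (of s) = of s * of t ^ q s)
    (L : List (α × Bool)) :
    ∃ (u : FreeGroup ({s : α // s ≠ t} × ℤ)) (m : ℤ), ψ (FreeGroup.mk L) = th t u * of t ^ m ∧
      nm u ≤ L.length ∧ ((∃ x ∈ L, x.1 = t) → nm u < L.length) := by
  have hone : ∀ x : α × Bool, ∃ (u : FreeGroup ({s : α // s ≠ t} × ℤ)) (m : ℤ),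
      ψ (FreeGroup.mk [x]) = th t u * of t ^ m ∧ nm u ≤ 1 ∧ (x.1 = t → nm u = 0) := by
    rintro ⟨s, b⟩
    have n1 : nm (1 : FreeGroup ({s : α // s ≠ t} × ℤ)) = 0 := by
      have := nm_mk_le ([] : List (({s : α // s ≠ t} × ℤ) × Bool))
      have h : FreeGroup.mk ([] : List (({s : α // s ≠ t} × ℤ) × Bool)) = 1 := rfl
      rw [h] at this
      simpa using this
    have n2 : ∀ y : {s : α // s ≠ t} × ℤ, nm (of y) ≤ 1 := fun y => nm_mk_le [(y, true)]
    by_cases h : s = t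
    · subst h
      rw [mk_single]
      cases b
      · exact ⟨1, -p, by simp [ht], by omega, fun _ => n1⟩
      · exact ⟨1, p, by simp [ht], by omega, fun _ => n1⟩
    · rw [mk_single]
      cases b
      · refine ⟨(of (⟨s, h⟩, -(q s)))⁻¹, -(q s), ?_, ?_, fun h' => absurd h' h⟩
        · simp [hs s h, th_of, mul_assoc]
        · rw [nm_inv]; exact n2 _
      · refine ⟨of (⟨s, h⟩, 0), q s, ?_, n2 _, fun h' => absurd h' h⟩
        · simp [hs s h, th_of]
  induction L with
  | nil => 
    refine ⟨1, 0, ?_, ?_, ?_⟩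
    · have h : FreeGroup.mk ([] : List (α × Bool)) = 1 := rfl
      simp [h]
    · exact nm_mk_le []
    · simp
  | cons x L ih =>
    obtain ⟨u, m, h1, h2, h3⟩ := ih
    obtain ⟨v, k, h4, h5, h6⟩ := hone x
    have hle := nm_mul_le v (sh k u)
    have hle2 := nm_sh_le k u
    refine ⟨v * sh k u, k + m, ?_, ?_, ?_⟩
    · rw [mk_cons, map_mul, h1, h4, th_mul]
    · simp only [List.length_cons]; omega
    · rintro ⟨y, hy, hyt⟩
      simp only [List.length_cons]
      rcases List.mem_cons.1 hy with rfl | hy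
      · have := h6 hyt; omega
      · have := h3 ⟨y, hy, hyt⟩; omega

lemma rewr0 (t : α) (ψ : FreeGroup α →* FreeGroup α) (p : ℤ) (q : α → ℤ)
    (ht : ψ (of t) = of t ^ p) (hs : ∀ s, s ≠ t → ψ (of s) = of s * of t ^ q s)
    (n : ℕ) (hP : ∀ (β : Type) (r : FreeGroup β), nm r ≤ n → Good r)
    (L : List (α × Bool)) (hL : L.length ≤ n + 1) (htL : ∃ x ∈ L, x.1 = t)
    (hex : ex t (ψ (FreeGroup.mk L)) = 1) : Good (ψ (FreeGroup.mk L)) := by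
  obtain ⟨u, m, h1, h2, h3⟩ := rewr t ψ p q ht hs L
  have h4 := h3 htL
  rw [h1, map_mul, ex_th, map_zpow, ex_self, one_mul, ← ofAdd_zsmul] at hex
  have : m = 0 := by simpa using hex
  rw [h1, this, zpow_zero, mul_one]
  exact key t n hP u (by omega)

end Theta
end KMS

namespace KMS
open FreeGroup (of)
variable {α : Type}

lemma of_zpow_inj (t : α) (j : ℤ) (h : of t ^ j = 1) : j = 0 := by
  have := congrArg (ex t) h
  rw [map_zpow, ex_self, map_one (ex t), ← ofAdd_zsmul] at this
  simpa using this

/-- The twisting homomorphism. -/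
noncomputable def tw {G : Type} [Group G] (t : α) (q : α → ℤ) (x y : G) (f : FreeGroup α →* G) :
    FreeGroup α →* G :=
  letI := Classical.decEq α
  FreeGroup.lift (fun z => if z = t then x else f (of z) * y ^ q z)

lemma tw_t {G : Type} [Group G] (t : α) (q : α → ℤ) (x y : G) (f : FreeGroup α →* G) :
    tw t q x y f (of t) = x := by simp [tw]

lemma tw_ne {G : Type} [Group G] (t : α) (q : α → ℤ) (x y : G) (f : FreeGroup α →* G) {z : α}
    (h : z ≠ t) : tw t q x y f (of z) = f (of z) * y ^ q z := by simp [tw, h]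

lemma tw_comp {Γ P : Type} [Group Γ] [Group P] (t : α) (q : α → ℤ) (A : ℤ) (f : FreeGroup α →* Γ)
    (ι : Γ →* P) (x : P) (hx : x ^ A = ι (f (of t))) (u : FreeGroup α) :
    tw t (fun z => - q z) x x (ι.comp f) (tw t q (of t ^ A) (of t) (MonoidHom.id _) u) = ι (f u) := by
  have : (tw t (fun z => - q z) x x (ι.comp f)).comp (tw t q (of t ^ A) (of t) (MonoidHom.id _)) =
      ι.comp f := by
    ext z
    by_cases h : z = t
    · subst h
      simp [tw_t, hx]
    · simp [tw_t, tw_ne t _ _ _ _ h]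
  exact DFunLike.congr_fun this u

lemma twist (s t : α) (hst : t ≠ s) (r : FreeGroup α) (A : ℤ) (q : α → ℤ) (hA : A ≠ 0)
    (hex : ex s r ≠ 1)
    (hG : Good (tw t q (of t ^ A) (of t) (MonoidHom.id _) r)) : FreiAt r s ∧ Tors r := by
  set ψ := tw t q (of t ^ A) (of t) (MonoidHom.id _) with hψ
  have hts : of t ∈ Kset {x | x ≠ s} := of_mem_Kset hst
  have hexψ : ∀ u, ex s (ψ u) = ex s u := by
    have : (ex s).comp ψ = ex s := by
      ext1 z
      by_cases h : z = t
      · subst h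
        simp [hψ, tw_t, ex_ne hst]
      · simp [hψ, tw_ne t _ _ _ _ h, ex_ne hst]
    exact fun u => DFunLike.congr_fun this u
  have hKψ : ∀ u ∈ Kset {x | x ≠ s}, ψ u ∈ Kset {x | x ≠ s} := by
    apply Kset_hom
    intro z hz
    by_cases h : z = t
    · subst h
      rw [hψ, tw_t]
      exact zpow_mem hts _
    · rw [hψ, tw_ne t _ _ _ _ h]
      exact mul_mem (of_mem_Kset hz) (zpow_mem hts _)
  have hNψ : ∀ u ∈ NC r, ψ u ∈ NC (ψ r) := NC_hom ψ r _ (NC_self _)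
  obtain ⟨P, _, ι, x, hι, hx, hmal, huniv⟩ := adjoin_root (of t) (of_zpow_inj t) A hA
  let χ := tw t (fun z => - q z) x x (ι.comp (MonoidHom.id _))
  have hχ : ∀ u, χ (ψ u) = ι u := tw_comp t q A (MonoidHom.id _) ι x hx
  have hψinj : Function.Injective ψ := by
    intro u v h
    apply hι
    rw [← hχ, ← hχ, h]
  have hFr : FreiAt r s := by
    intro u hu hN
    apply hψinj
    rw [map_one]
    exact hG.1 s (Ess_of_ex s _ (by rwa [hexψ])) _ (hKψ u hu) (hNψ u hN)
  refine ⟨hFr, ?_⟩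
  intro g n hn hg
  by_cases hg1 : g ∈ NC r
  · exact ⟨1, 1, Commute.one_left _, by simpa using hg1⟩
  obtain ⟨h, w, hw, hN⟩ := hG.2.1 (ψ g) n hn (by rw [← map_pow]; exact hNψ _ hg)
  obtain ⟨w0, hw0⟩ := hmal r (by
    intro c j hcj
    apply hex
    have := congrArg (ex s) hcj
    simpa [ex_ne hst] using this) (χ w) (by
    have h1 := (hw.map χ).eq
    rw [hχ] at h1
    rw [h1, mul_inv_cancel_right]
    exact ⟨r, rfl⟩)
  obtain ⟨Ψ, hΨ1, hΨ2⟩ := huniv _ inferInstance ψ (of t) (by rw [hψ, tw_t])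
  have hΨχ : ∀ u, Ψ (χ u) = u := by
    have : Ψ.comp χ = MonoidHom.id _ := by
      ext1 z
      by_cases h : z = t
      · subst h
        simp [χ, tw_t, hΨ2]
      · simp [χ, tw_ne t _ _ _ _ h, hΨ2, hΨ1, hψ]
    exact fun u => DFunLike.congr_fun this u
  have hwψ : w = ψ w0 := by rw [← hΨ1, hw0, hΨχ]
  subst hwψ
  have hcomm : Commute w0 r := by
    apply hψinj
    rw [map_mul, map_mul]
    exact hw.eq
  let π := QuotientGroup.mk' (NC r)
  have hπ : ∀ u, π u = 1 ↔ u ∈ NC r := fun u => QuotientGroup.eq_one_iff u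
  have hb : ∀ j : ℤ, π (of t) ^ j = 1 → j = 0 := by
    intro j hj
    rw [← map_zpow, hπ] at hj
    exact of_zpow_inj t j (hFr _ (zpow_mem hts j) hj)
  obtain ⟨P', _, ι', x', hι', hx', hmal', -⟩ := adjoin_root (π (of t)) hb A hA
  let χ' := tw t (fun z => - q z) x' x' (ι'.comp π)
  have hχ' : ∀ u, χ' (ψ u) = ι' (π u) := tw_comp t q A π ι' x' hx'
  have hker := NC_ker χ' (ψ r) (by rw [hχ', (hπ r).2 (NC_self r), map_one])
  have h1 := hker _ hN
  simp only [map_mul, map_inv, hχ'] at h1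
  have h2 : ι' (π g) = χ' h * ι' (π w0) * (χ' h)⁻¹ := inv_mul_eq_one.1 h1
  obtain ⟨y, hy⟩ := hmal' (π g) (by
    intro c j hcj
    have h3 : (π (of t) ^ j) ^ n = 1 := by
      rw [← hcj, conj_pow, ← map_pow, (hπ _).2 hg]
      simp
    rw [← zpow_natCast, ← zpow_mul] at h3
    have h4 := hb _ h3
    have h5 : j = 0 := by
      rcases mul_eq_zero.1 h4 with h | h
      · exact h
      · omega
    subst h5
    apply hg1
    rw [← hπ]
    simpa using hcj) (χ' h)⁻¹ (by
    rw [h2]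
    refine ⟨π w0, ?_⟩
    group)
  obtain ⟨h0, rfl⟩ := QuotientGroup.mk'_surjective (NC r) y
  refine ⟨h0⁻¹, w0, hcomm, ?_⟩
  rw [← hπ]
  apply hι'
  rw [map_one]
  simp only [map_mul, map_inv]
  rw [inv_mul_eq_one, h2]
  have hy' : ι' (π h0) = (χ' h)⁻¹ := hy
  rw [hy']
  simp

lemma Ordd_of_ex (s : α) (r : FreeGroup α) (h : ex s r ≠ 1) : Ordd r := by
  intro _ V k j hk hV hj
  subst hV
  have h1 : ex s (V ^ j) ∈ Subgroup.zpowers (ex s (V ^ k)) :=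
    NC_hom (ex s) (V ^ k) _ (Subgroup.mem_zpowers _) _ hj
  obtain ⟨i, hi⟩ := Subgroup.mem_zpowers_iff.1 h1
  rw [map_pow, map_pow] at hi
  rw [map_pow] at h
  have hv : (ex s V).toAdd ≠ 0 := by
    intro h0
    apply h
    have : ex s V = 1 := by simpa using h0
    rw [this, one_pow]
  have h2 := congrArg Multiplicative.toAdd hi
  simp only [toAdd_zpow, toAdd_pow, smul_eq_mul, nsmul_eq_mul] at h2
  have h3 : i * k = j := by
    apply mul_right_cancel₀ hv
    rw [← h2]; ring
  have : (k : ℤ) ∣ j := ⟨i, by rw [← h3]; ring⟩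
  exact_mod_cast this

lemma Good_zpow (a : α) (j : ℤ) : Good (of a ^ j) := by
  classical
  refine ⟨?_, tors_base a j, ?_⟩
  · intro s hs u hu hN
    have hsa : s = a := by
      by_contra hne
      apply hs 1
      simp only [one_mul, inv_one, mul_one]
      exact zpow_mem (of_mem_Kset (Ne.symm hne)) j
    subst hsa
    let ρ : FreeGroup α →* FreeGroup α := FreeGroup.lift (fun x => if x = s then 1 else of x)
    have h1 : ρ u = MonoidHom.id _ u := Kset_eq ρ _ (fun x hx => by
      have : x ≠ s := hx
      simp [ρ, this]) u hu
    have h2 : ρ u = 1 := NC_ker ρ _ (by simp [ρ]) u hN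
    rw [h2] at h1
    exact h1.symm
  · intro hne
    refine Ordd_of_ex a _ ?_ hne
    intro h
    apply hne
    rw [map_zpow, ex_self, ← ofAdd_zsmul] at h
    have : j = 0 := by simpa using h
    simp [this]

lemma step (n : ℕ) (hP : ∀ (β : Type) (r : FreeGroup β), nm r ≤ n → Good r)
    (r : FreeGroup α) (hr : nm r ≤ n + 1) : Good r := by
  classical
  obtain ⟨c, L, hc, hlen, hess⟩ := ess_list r
  apply Good_conj c
  rw [← hc]
  have hlen' := hlen.trans hr
  cases hL : L with
  | nil => exact Good_one
  | cons z L' =>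
  rw [← hL]
  have hz : z ∈ L := by simp [hL]
  have hocc : ∀ s, Ess (FreeGroup.mk L) s → ∃ x ∈ L, x.1 = s := by
    intro s hs
    by_contra hcon
    push Not at hcon
    apply hs 1
    simp only [one_mul, inv_one, mul_one]
    exact mk_mem_Kset L hcon
  by_cases h1 : ∀ x ∈ L, x.1 = z.1
  · have h2 : FreeGroup.mk L ∈ Kset {z.1} := mk_mem_Kset L h1
    rw [Kset, Set.image_singleton, ← Subgroup.zpowers_eq_closure] at h2
    obtain ⟨j, hj⟩ := h2
    dsimp at hj
    rw [← hj]
    exact Good_zpow _ _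
  push Not at h1
  obtain ⟨z', hz', hzz⟩ := h1
  by_cases h2 : ∃ x ∈ L, ex x.1 (FreeGroup.mk L) = 1
  · obtain ⟨x, hx, hx1⟩ := h2
    exact rewr0 x.1 (MonoidHom.id _) 1 0 (by simp) (by simp) n hP L hlen' ⟨x, hx, rfl⟩ hx1
  push Not at h2
  have T : ∀ x ∈ L, ∀ y ∈ L, y.1 ≠ x.1 → FreiAt (FreeGroup.mk L) x.1 ∧ Tors (FreeGroup.mk L) := by
    intro x hx y hy hxy
    set A := (ex x.1 (FreeGroup.mk L)).toAdd with hA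
    set B := (ex y.1 (FreeGroup.mk L)).toAdd with hB
    let q : α → ℤ := fun w => if w = x.1 then -B else 0
    apply twist x.1 y.1 hxy (FreeGroup.mk L) A q ?_ (h2 x hx)
    · apply rewr0 y.1 _ A q (tw_t _ _ _ _ _) (fun s hs => tw_ne _ _ _ _ _ hs) n hP L hlen'
        ⟨y, hy, rfl⟩
      have : (ex y.1).comp (tw y.1 q (of y.1 ^ A) (of y.1) (MonoidHom.id _)) =
          (ex y.1) ^ A * (ex x.1) ^ (-B) := by
        ext1 w
        by_cases hw : w = y.1
        · subst hw
          simp [tw_t, ex_ne hxy]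
        · by_cases hwx : w = x.1
          · simp [hwx, tw_ne _ _ _ _ _ hxy.symm, ex_self, ex_ne hxy.symm, q]
          · simp [tw_ne _ _ _ _ _ hw, ex_ne hw, ex_ne hwx, q, hwx]
      have h3 := DFunLike.congr_fun this (FreeGroup.mk L)
      simp only [MonoidHom.comp_apply] at h3
      rw [h3]
      apply Multiplicative.toAdd.injective
      show ((ex y.1) (FreeGroup.mk L) ^ A * (ex x.1) (FreeGroup.mk L) ^ (-B)).toAdd = 0
      rw [toAdd_mul, toAdd_zpow, toAdd_zpow, ← hA, ← hB]
      simp only [smul_eq_mul]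
      ring
    · intro h
      exact h2 x hx (by simpa [hA] using h)
  refine ⟨?_, (T z hz z' hz' hzz).2, Ordd_of_ex z.1 _ (h2 z hz)⟩
  intro s hs
  obtain ⟨x, hx, rfl⟩ := hocc s hs
  by_cases hxz : x.1 = z.1
  · exact (T x hx z' hz' (by rw [hxz]; exact hzz)).1
  · exact (T x hx z hz (Ne.symm hxz)).1

theorem all_good (n : ℕ) : ∀ (β : Type) (r : FreeGroup β), nm r ≤ n → Good r := by
  induction n with
  | zero =>
    intro β r hr
    obtain ⟨L, rfl, hL⟩ := exists_list_nm r
    have : L = [] := List.length_eq_zero_iff.1 (by omega)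
    subst this
    exact Good_one
  | succ n ih => exact fun β r hr => step n ih r hr

theorem good (r : FreeGroup α) : Good r := all_good _ _ r le_rfl
end KMS

namespace KMS
open FreeGroup (of)

lemma free_comm_subsingleton {X : Type} (h : ∀ u v : FreeGroup X, u * v = v * u) :
    Subsingleton X := by
  classical
  refine ⟨fun x y => ?_⟩
  by_contra hne
  let f : FreeGroup X →* Equiv.Perm (Fin 3) :=
    FreeGroup.lift (fun z => if z = x then Equiv.swap 0 1 else Equiv.swap 1 2)
  have h1 := congrArg f (h (of x) (of y))
  simp only [map_mul, f, FreeGroup.lift_apply_of, if_true, if_neg (Ne.symm hne)] at h1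
  revert h1
  decide

lemma commute_common {α : Type} (w V : FreeGroup α) (h : Commute w V) :
    ∃ (z : FreeGroup α) (a b : ℤ), w = z ^ a ∧ V = z ^ b := by
  let K := Subgroup.closure ({w, V} : Set (FreeGroup α))
  have hcomm : ∀ x ∈ K, ∀ y ∈ K, x * y = y * x := by
    intro x hx y hy
    have h1 : K ≤ Subgroup.centralizer (K : Set (FreeGroup α)) := by
      rw [Subgroup.centralizer_closure, Subgroup.closure_le]
      intro u hu
      simp only [Set.mem_insert_iff, Set.mem_singleton_iff] at hu
      show u ∈ Subgroup.centralizer _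
      rw [Subgroup.mem_centralizer_iff]
      intro v hv
      simp only [Set.mem_insert_iff, Set.mem_singleton_iff] at hv
      have := h.eq
      rcases hu with rfl | rfl <;> rcases hv with rfl | rfl
      · rfl
      · exact this.symm
      · exact this
      · rfl
    exact (Subgroup.mem_centralizer_iff.1 (h1 hy)) x hx
  have hw : w ∈ K := Subgroup.subset_closure (by simp)
  have hV : V ∈ K := Subgroup.subset_closure (by simp)
  let e := IsFreeGroup.toFreeGroup K
  have hss : Subsingleton (IsFreeGroup.Generators K) := by
    apply free_comm_subsingleton
    intro u v
    apply e.symm.injective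
    rw [map_mul, map_mul]
    exact Subtype.ext (hcomm _ (e.symm u).2 _ (e.symm v).2)
  have hcyc : ∃ z : K, ∀ x : K, ∃ n : ℤ, x = z ^ n := by
    rcases isEmpty_or_nonempty (IsFreeGroup.Generators K) with hE | ⟨⟨d⟩⟩
    · refine ⟨1, fun x => ⟨0, ?_⟩⟩
      apply e.injective
      exact Subsingleton.elim _ _
    · letI : Unique (IsFreeGroup.Generators K) := ⟨⟨d⟩, fun a => Subsingleton.elim _ _⟩
      obtain ⟨g, hg⟩ := IsCyclic.exists_generator (α := FreeGroup (IsFreeGroup.Generators K))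
      refine ⟨e.symm g, fun x => ?_⟩
      obtain ⟨n, hn⟩ := Subgroup.mem_zpowers_iff.1 (hg (e x))
      refine ⟨n, ?_⟩
      rw [← map_zpow, hn, e.symm_apply_apply]
  obtain ⟨z, hz⟩ := hcyc
  obtain ⟨a, ha⟩ := hz ⟨w, hw⟩
  obtain ⟨b, hb⟩ := hz ⟨V, hV⟩
  exact ⟨z, a, b, by simpa using congrArg Subtype.val ha, by simpa using congrArg Subtype.val hb⟩

lemma centr {α : Type} (V : FreeGroup α) (k : ℕ) (hk : 1 < k)
    (hV : ∀ (W : FreeGroup α) (m : ℕ), 2 ≤ m → V ≠ W ^ m) (w : FreeGroup α)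
    (hw : Commute w (V ^ k)) : ∃ m : ℤ, w = V ^ m := by
  have h1 : Commute w V := by
    have h2 : (w * V * w⁻¹) ^ k = V ^ k := by
      rw [conj_pow, hw.eq, mul_inv_cancel_right]
    have h3 : w * V * w⁻¹ = V := pow_left_injective (by omega) h2
    exact mul_inv_eq_iff_eq_mul.1 h3
  obtain ⟨z, a, b, rfl, rfl⟩ := commute_common w V h1
  rcases lt_trichotomy b 0 with hb | hb | hb
  · by_cases h : b = -1
    · subst h
      exact ⟨-a, by rw [← zpow_mul]; simp⟩
    · exfalso
      refine hV z⁻¹ b.natAbs (by omega) ?_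
      rw [← zpow_natCast, inv_zpow']
      congr 1; omega
  · exfalso
    subst hb
    exact hV 1 2 le_rfl (by simp)
  · by_cases h : b = 1
    · subst h
      exact ⟨a, by simp⟩
    · exfalso
      refine hV z b.natAbs (by omega) ?_
      rw [← zpow_natCast]
      congr 1; omega
end KMS

theorem one_relator_torsion {α : Type} (V : FreeGroup α) (k : ℕ) (hk : 1 < k)
    (hV : ∀ (W : FreeGroup α) (m : ℕ), 2 ≤ m → V ≠ W ^ m) :
    orderOf ((QuotientGroup.mk' (Subgroup.normalClosure {V ^ k})) V) = k ∧
    ∀ g : FreeGroup α ⧸ Subgroup.normalClosure {V ^ k}, IsOfFinOrder g →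
      ∃ (h : FreeGroup α ⧸ Subgroup.normalClosure {V ^ k}) (m : ℤ),
        g = h * ((QuotientGroup.mk' (Subgroup.normalClosure {V ^ k})) V) ^ m * h⁻¹ := by
  obtain ⟨-, hT, hO⟩ := KMS.good (V ^ k)
  have hne : V ^ k ≠ 1 := by
    intro h
    have hV1 : V = 1 := pow_left_injective (n := k) (by omega) (by simpa using h)
    exact hV 1 2 le_rfl (by rw [hV1]; simp)
  have hmem : ∀ u, QuotientGroup.mk' (Subgroup.normalClosure {V ^ k}) u = 1 ↔
      u ∈ Subgroup.normalClosure {V ^ k} := fun u => QuotientGroup.eq_one_iff u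
  constructor
  · apply Nat.dvd_antisymm
    · apply orderOf_dvd_of_pow_eq_one
      rw [← map_pow, hmem]
      exact KMS.NC_self _
    · refine hO hne V k _ (by omega) rfl ?_
      rw [← hmem, map_pow]
      exact pow_orderOf_eq_one _
  · intro g hg
    obtain ⟨x, rfl⟩ := QuotientGroup.mk'_surjective _ g
    obtain ⟨n, hn, hx⟩ := isOfFinOrder_iff_pow_eq_one.1 hg
    rw [← map_pow, hmem] at hx
    obtain ⟨h, w, hw, hN⟩ := hT x n hn hx
    obtain ⟨m, rfl⟩ := KMS.centr V k hk hV w hw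
    refine ⟨QuotientGroup.mk' _ h, m, ?_⟩
    rw [← hmem, map_mul, map_inv, inv_mul_eq_one] at hN
    rw [hN, map_mul, map_mul, map_zpow, map_inv]
end

section
/- Let F be a free group, let p ∈ F be a primitive element (a member of some basis of F), and let H be a locally indicable group. If r ∈ F ∗ H is not conjugate to an element of F, not conjugate to an element of H, and not conjugate to an element of ⟨p⟩ ∗ H, then ⟨p⟩ ∗ H embeds canonically into (F ∗ H)/⟨⟨r⟩⟩. -/
open Monoid

/-- A group is locally indicable if every non-trivial finitely generated subgroup
surjects onto `ℤ`. -/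
def LocallyIndicable (G : Type) [Group G] : Prop :=
  ∀ H : Subgroup G, H ≠ ⊥ → H.FG →
    ∃ f : H →* Multiplicative ℤ, Function.Surjective f

/-- An element of a free group is primitive if it is part of a free basis. -/
def IsPrimitive {α : Type} (p : FreeGroup α) : Prop :=
  ∃ (β : Type) (e : FreeGroup (Option β) ≃* FreeGroup α), e (FreeGroup.of none) = p
set_option linter.unusedSectionVars false

namespace Frei

open Function

def Fam (A1 A2 : Type) : Bool → Type
  | false => A1
  | true => A2

instance famGroup (A1 A2 : Type) [h1 : Group A1] [h2 : Group A2] : ∀ i, Group (Fam A1 A2 i)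
  | false => h1
  | true => h2

def famHom {C A1 A2 : Type} [Group C] [Group A1] [Group A2] (f1 : C →* A1) (f2 : C →* A2) :
    ∀ i, C →* Fam A1 A2 i
  | false => f1
  | true => f2

theorem amalg {C A1 A2 : Type} [Group C] [Group A1] [Group A2] (f1 : C →* A1) (f2 : C →* A2)
    (h1 : Injective f1) (h2 : Injective f2) :
    ∃ (E : Type) (_ : Group E) (g1 : A1 →* E) (g2 : A2 →* E), Injective g1 ∧ Injective g2 ∧
      ∀ c, g1 (f1 c) = g2 (f2 c) := by
  have hφ : ∀ i, Injective (famHom f1 f2 i) := by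
    intro i
    cases i
    · exact h1
    · exact h2
  refine ⟨Monoid.PushoutI (famHom f1 f2), inferInstance,
    (Monoid.PushoutI.of (φ := famHom f1 f2) false),
    (Monoid.PushoutI.of (φ := famHom f1 f2) true),
    Monoid.PushoutI.of_injective hφ false, Monoid.PushoutI.of_injective hφ true, ?_⟩
  intro c
  exact (Monoid.PushoutI.of_apply_eq_base (famHom f1 f2) false c).trans
    (Monoid.PushoutI.of_apply_eq_base (famHom f1 f2) true c).symm

theorem hnn {C G : Type} [Group C] [Group G] (f1 f2 : C →* G)
    (h1 : Injective f1) (h2 : Injective f2) :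
    ∃ (E : Type) (_ : Group E) (g : G →* E) (t : E), Injective g ∧
      ∀ c, t * g (f1 c) * t⁻¹ = g (f2 c) := by
  let φ : f1.range ≃* f2.range := (MonoidHom.ofInjective h1).symm.trans (MonoidHom.ofInjective h2)
  refine ⟨HNNExtension G _ _ φ, inferInstance, HNNExtension.of, HNNExtension.t,
    HNNExtension.of_injective φ, ?_⟩
  intro c
  have h := HNNExtension.t_mul_of (φ := φ) (MonoidHom.ofInjective h1 c)
  have e1 : ((MonoidHom.ofInjective h1 c : f1.range) : G) = f1 c := rfl
  have e2 : ((φ (MonoidHom.ofInjective h1 c) : f2.range) : G) = f2 c := by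
    simp only [φ, MulEquiv.trans_apply, MulEquiv.symm_apply_apply]
    rfl
  rw [e1, e2] at h
  rw [h, mul_inv_cancel_right]

theorem li_of_map {G Q : Type} [Group G] [Group Q] (hQ : LocallyIndicable Q) (f : G →* Q)
    (S : Subgroup G) (hS : S.FG) (h : S.map f ≠ ⊥) :
    ∃ g : S →* Multiplicative ℤ, Surjective g := by
  obtain ⟨g, hg⟩ := hQ (S.map f) h (by
    obtain ⟨T, rfl⟩ := hS
    classical
    exact ⟨T.image f, by rw [Finset.coe_image, MonoidHom.map_closure]⟩)
  exact ⟨g.comp (f.subgroupMap S), hg.comp (f.subgroupMap_surjective S)⟩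

theorem li_of_injective {G Q : Type} [Group G] [Group Q] (hQ : LocallyIndicable Q) (f : G →* Q)
    (hf : Injective f) : LocallyIndicable G := by
  intro S hS hfg
  refine li_of_map hQ f S hfg ?_
  rwa [Ne, Subgroup.map_eq_bot_iff_of_injective _ hf]

theorem li_semidirect {N Q : Type} [Group N] [Group Q] (φ : Q →* MulAut N)
    (hN : LocallyIndicable N) (hQ : LocallyIndicable Q) : LocallyIndicable (N ⋊[φ] Q) := by
  intro S hS hfg
  by_cases h : S.map SemidirectProduct.rightHom = ⊥
  · have hr : ∀ x ∈ S, x.right = 1 := by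
      intro x hx
      have : SemidirectProduct.rightHom x ∈ S.map SemidirectProduct.rightHom :=
        Subgroup.mem_map_of_mem _ hx
      rw [h] at this
      exact this
    let g : S →* N :=
      { toFun := fun x => x.1.left
        map_one' := rfl
        map_mul' := by
          intro x y
          simp [hr x.1 x.2] }
    have hg : Injective g := by
      intro x y hxy
      apply Subtype.ext
      apply SemidirectProduct.ext
      · exact hxy
      · rw [hr x.1 x.2, hr y.1 y.2]
    have hS' : LocallyIndicable S := li_of_injective hN g hg
    have : Group.FG S := (Group.fg_iff_subgroup_fg S).2 hfg
    obtain ⟨k, hk⟩ := hS' ⊤ (by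
      rw [Ne, ← Subgroup.map_eq_bot_iff_of_injective _ S.subtype_injective]
      simpa [← MonoidHom.range_eq_map] using hS) Group.FG.out
    exact ⟨k.comp ((Subgroup.topEquiv (G := S)).symm.toMonoidHom),
      hk.comp (Subgroup.topEquiv (G := S)).symm.surjective⟩
  · exact li_of_map hQ _ S hfg h

theorem li_free (X : Type) : LocallyIndicable (FreeGroup X) := by
  intro S hS _
  let e := IsFreeGroup.toFreeGroup S
  have hne : Nonempty (IsFreeGroup.Generators S) := by
    by_contra hcon
    rw [not_nonempty_iff] at hcon
    apply hS
    rw [Subgroup.eq_bot_iff_forall]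
    intro x hx
    have : (⟨x, hx⟩ : S) = 1 := e.injective (Subsingleton.elim _ _)
    simpa using congrArg Subtype.val this
  obtain ⟨x0⟩ := hne
  refine ⟨(FreeGroup.lift (fun _ => Multiplicative.ofAdd (1:ℤ))).comp e.toMonoidHom, ?_⟩
  intro n
  refine ⟨e.symm (FreeGroup.of x0 ^ (Multiplicative.toAdd n)), ?_⟩
  simp [← ofAdd_zsmul]

theorem li_aux {G : Type} [Group G] (hG : LocallyIndicable G) (s : Set G) (hs : s.Finite)
    {b : G} (hb : b ∈ s) (hb1 : b ≠ 1) :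
    ∃ φ : Subgroup.closure s →* Multiplicative ℤ, ∃ c, ∃ hc : c ∈ s,
      φ ⟨c, Subgroup.subset_closure hc⟩ ≠ 1 := by
  obtain ⟨φ, hφ⟩ := hG (Subgroup.closure s) (by
    intro h
    have := Subgroup.subset_closure hb
    rw [h] at this
    exact hb1 this) ((Subgroup.fg_iff _).2 ⟨s, rfl, hs⟩)
  refine ⟨φ, ?_⟩
  by_contra! hcon
  have : Subgroup.closure s ≤ φ.ker.map (Subgroup.closure s).subtype := by
    rw [Subgroup.closure_le]
    intro c hc
    exact ⟨⟨c, Subgroup.subset_closure hc⟩, hcon c hc, rfl⟩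
  obtain ⟨x, hx⟩ := hφ (Multiplicative.ofAdd 1)
  obtain ⟨y, hy, hyx⟩ := this x.2
  have : y = x := Subtype.ext hyx
  subst this
  have h1 : φ y = 1 := hy
  rw [h1] at hx
  have : (0:ℤ) = 1 := congrArg Multiplicative.toAdd hx
  omega

/-! The group `B * F(ι)` -/

abbrev GG (B ι : Type) [Group B] := Coprod B (FreeGroup ι)

section
variable {B ι : Type} [Group B]

def inB : B →* GG B ι := Coprod.inl
def tau (i : ι) : GG B ι := Coprod.inr (FreeGroup.of i)

def glift {D : Type} [Group D] (f : B →* D) (x : ι → D) : GG B ι →* D :=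
  Coprod.lift f (FreeGroup.lift x)

@[simp] theorem glift_inB {D : Type} [Group D] (f : B →* D) (x : ι → D) (b : B) :
    glift f x (inB b) = f b := by simp [glift, inB]
@[simp] theorem glift_tau {D : Type} [Group D] (f : B →* D) (x : ι → D) (i : ι) :
    glift f x (tau i) = x i := by simp [glift, tau]

theorem ghom_ext {D : Type} [Group D] {f g : GG B ι →* D} (h1 : ∀ b, f (inB b) = g (inB b))
    (h2 : ∀ i, f (tau i) = g (tau i)) : f = g := by
  apply Coprod.hom_ext
  · ext b; exact h1 b
  · apply FreeGroup.ext_hom; intro i; exact h2 i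

def act : B →* MulAut (FreeGroup (ι × B)) where
  toFun b := FreeGroup.freeGroupCongr ((Equiv.refl ι).prodCongr (Equiv.mulLeft b))
  map_one' := by
    ext x
    refine congrFun (congrArg DFunLike.coe (FreeGroup.ext_hom
      (f := (FreeGroup.freeGroupCongr ((Equiv.refl ι).prodCongr (Equiv.mulLeft (1:B)))).toMonoidHom)
      (g := MonoidHom.id _) ?_)) x
    intro a; simp
  map_mul' a b := by
    ext x
    refine congrFun (congrArg DFunLike.coe (FreeGroup.ext_hom
      (f := (FreeGroup.freeGroupCongr ((Equiv.refl ι).prodCongr (Equiv.mulLeft (a*b)))).toMonoidHom)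
      (g := (FreeGroup.freeGroupCongr ((Equiv.refl ι).prodCongr (Equiv.mulLeft (a)))).toMonoidHom.comp
       (FreeGroup.freeGroupCongr ((Equiv.refl ι).prodCongr (Equiv.mulLeft (b)))).toMonoidHom) ?_)) x
    rintro ⟨i, c⟩; simp [mul_assoc]

theorem act_of (b : B) (i : ι) (c : B) :
    act b (FreeGroup.of (i, c)) = FreeGroup.of (i, b * c) := by simp [act]

def toSD : GG B ι →* FreeGroup (ι × B) ⋊[act] B :=
  glift SemidirectProduct.inr (fun i => SemidirectProduct.inl (FreeGroup.of (i, 1)))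

def ofSD : FreeGroup (ι × B) ⋊[act] B →* GG B ι :=
  SemidirectProduct.lift (FreeGroup.lift fun x => inB x.2 * tau x.1 * (inB x.2)⁻¹) inB (by
    intro g
    apply FreeGroup.ext_hom
    rintro ⟨i, c⟩
    simp [act_of, mul_assoc])

theorem toSD_injective : Injective (toSD : GG B ι →* _) := by
  have : (ofSD.comp toSD : GG B ι →* GG B ι) = MonoidHom.id _ := by
    apply ghom_ext
    · intro b; simp [toSD, ofSD]
    · intro b; simp [toSD, ofSD]
  intro x y h
  have h2 := congrArg ofSD h
  have hx := DFunLike.congr_fun this x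
  have hy := DFunLike.congr_fun this y
  simp only [MonoidHom.comp_apply, MonoidHom.id_apply] at hx hy
  rw [← hx, ← hy, h2]

theorem li_GG (hB : LocallyIndicable B) : LocallyIndicable (GG B ι) :=
  li_of_injective (li_semidirect _ (li_free _) hB) toSD toSD_injective

end

section words
variable {B ι : Type} [Group B]

/-- `t` or its inverse -/
def pw {D : Type} [Group D] (t : D) (e : Bool) : D := cond e t t⁻¹

theorem map_pw {D E : Type} [Group D] [Group E] (f : D →* E) (t : D) (e : Bool) :
    f (pw t e) = pw (f t) e := by cases e <;> simp [pw]

/-- evaluation of a word -/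
def ev {D : Type} [Group D] (f : B →* D) (x : ι → D) : List (B × ι × Bool) → D
  | [] => 1
  | (b, h, e) :: l => f b * pw (x h) e * ev f x l

theorem ev_append {D : Type} [Group D] (f : B →* D) (x : ι → D) (l1 l2 : List (B × ι × Bool)) :
    ev f x (l1 ++ l2) = ev f x l1 * ev f x l2 := by
  induction l1 with
  | nil => simp [ev]
  | cons a l ih => obtain ⟨b, h, e⟩ := a; simp [ev, ih, mul_assoc]

theorem map_ev {D E : Type} [Group D] [Group E] (g : D →* E) (f : B →* D) (x : ι → D)
    (l : List (B × ι × Bool)) : g (ev f x l) = ev (g.comp f) (fun i => g (x i)) l := by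
  induction l with
  | nil => simp [ev]
  | cons a l ih => obtain ⟨b, h, e⟩ := a; simp [ev, ih, map_pw]

theorem ev_rot {D : Type} [Group D] (f : B →* D) (x : ι → D) (l1 l2 : List (B × ι × Bool))
    (h : ev f x (l1 ++ l2) = 1) : ev f x (l2 ++ l1) = 1 := by
  rw [ev_append] at *
  rw [mul_eq_one_iff_eq_inv] at h
  rw [h, mul_inv_cancel]

theorem ev_congr {D : Type} [Group D] (f : B →* D) (x y : ι → D) (l : List (B × ι × Bool))
    (h : ∀ a ∈ l, x a.2.1 = y a.2.1) : ev f x l = ev f y l := by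
  induction l with
  | nil => rfl
  | cons a l ih =>
    obtain ⟨b, i, e⟩ := a
    simp only [ev]
    rw [ih (fun a ha => h a (List.mem_cons_of_mem _ ha)), h (b, i, e) (by simp)]

def lst (p : ι × Bool) : List (B × ι × Bool) → ι × Bool
  | [] => p
  | a :: l => lst a.2 l

def Red (p : ι × Bool) : List (B × ι × Bool) → Prop
  | [] => True
  | a :: l => (a.1 = 1 → p.1 = a.2.1 → p.2 = a.2.2) ∧ Red a.2 l

def CR (l : List (B × ι × Bool)) : Prop := ∃ p, lst p l = p ∧ Red p l

theorem lst_append (p : ι × Bool) (l1 l2 : List (B × ι × Bool)) :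
    lst p (l1 ++ l2) = lst (lst p l1) l2 := by
  induction l1 generalizing p with
  | nil => rfl
  | cons a l ih => exact ih _

theorem Red_append (p : ι × Bool) (l1 l2 : List (B × ι × Bool)) :
    Red p (l1 ++ l2) ↔ Red p l1 ∧ Red (lst p l1) l2 := by
  induction l1 generalizing p with
  | nil => simp [Red, lst]
  | cons a l ih => simp [Red, lst, ih, and_assoc]

theorem lst_lst (p : ι × Bool) (l : List (B × ι × Bool)) : lst (lst p l) l = lst p l := by
  cases l <;> rfl

theorem lst_mem (p : ι × Bool) (l : List (B × ι × Bool)) (hl : l ≠ []) :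
    ∃ b, (b, lst p l) ∈ l := by
  induction l generalizing p with
  | nil => exact absurd rfl hl
  | cons a l ih =>
    cases l with
    | nil => exact ⟨a.1, by simp [lst]⟩
    | cons c l =>
      obtain ⟨b, hb⟩ := ih a.2 (by simp)
      exact ⟨b, List.mem_cons_of_mem _ hb⟩

theorem CR_rot (l1 l2 : List (B × ι × Bool)) (h : CR (l1 ++ l2)) : CR (l2 ++ l1) := by
  obtain ⟨p, hp, hr⟩ := h
  rw [lst_append] at hp
  rw [Red_append] at hr
  refine ⟨lst p l1, ?_, ?_⟩
  · rw [lst_append, hp]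
  · rw [Red_append, hp]
    exact ⟨hr.2, hr.1⟩

/-- dichotomy: either all consecutive pairs satisfy `R` or there is a bad place -/
theorem find_bad (R : ι × Bool → B × ι × Bool → Prop) (p : ι × Bool) (l : List (B × ι × Bool)) :
    (∀ l1 a l2, l = l1 ++ a :: l2 → R (lst p l1) a) ∨
      ∃ l1 a l2, l = l1 ++ a :: l2 ∧ ¬ R (lst p l1) a := by
  by_cases h : ∃ l1 a l2, l = l1 ++ a :: l2 ∧ ¬ R (lst p l1) a
  · exact Or.inr h
  · left
    intro l1 a l2 hl
    by_contra hc
    exact h ⟨l1, a, l2, hl, hc⟩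

theorem Red_of_forall (p : ι × Bool) (l : List (B × ι × Bool))
    (h : ∀ l1 a l2, l = l1 ++ a :: l2 →
      (a.1 = 1 → (lst p l1).1 = a.2.1 → (lst p l1).2 = a.2.2)) : Red p l := by
  induction l generalizing p with
  | nil => trivial
  | cons a l ih =>
    refine ⟨h [] a l rfl, ih _ ?_⟩
    intro l1 c l2 hl
    exact h (a :: l1) c l2 (by rw [hl]; rfl)

/-! normal form -/

def wl (g : B) : List (B × ι × Bool) → List ((ι × B) × Bool)
  | [] => []
  | (b, h, e) :: l => ((h, g * b), e) :: wl (g * b) l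

def wend (g : B) : List (B × ι × Bool) → B
  | [] => g
  | (b, _, _) :: l => wend (g * b) l

theorem toSD_ev (g : B) (l : List (B × ι × Bool)) :
    toSD (inB g * ev inB tau l) =
      SemidirectProduct.inl (FreeGroup.mk (wl g l)) * SemidirectProduct.inr (wend g l) := by
  induction l generalizing g with
  | nil =>
    simp [ev, wl, wend, toSD, ← FreeGroup.one_eq_mk]
  | cons a l ih =>
    obtain ⟨b, h, e⟩ := a
    have h1 : inB g * ev inB tau ((b, h, e) :: l) =
       (inB (g * b) * pw (tau h) e * (inB (g * b))⁻¹) * (inB (g*b) * ev inB (tau : ι → GG B ι) l) := by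
      simp [ev, mul_assoc]
    rw [h1, map_mul, ih]
    have h2 : toSD (inB (g * b) * pw (tau h) e * (inB (g * b))⁻¹) =
        (SemidirectProduct.inl (FreeGroup.mk [((h, g * b), e)]) :
          FreeGroup (ι × B) ⋊[act] B) := by
      rw [map_mul, map_mul, map_inv, map_pw]
      have e1 : ∀ c : B, toSD (inB c : GG B ι) = SemidirectProduct.inr c := by
        intro c; simp [toSD]
      have e2 : toSD (tau h : GG B ι) = SemidirectProduct.inl (FreeGroup.of (h, 1)) := by
        simp [toSD]
      rw [e1, e2, ← map_pw, ← map_inv, ← SemidirectProduct.inl_aut]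
      congr 1
      have := map_pw (act (g * b) : MulAut (FreeGroup (ι × B))).toMonoidHom (FreeGroup.of (h, (1:B))) e
      have h3 : (act (g * b)) (pw (FreeGroup.of (h, (1:B))) e) = pw (FreeGroup.of (h, g * b)) e := by
        rw [← mul_one (g * b), ← act_of, mul_one]
        exact this
      rw [h3]
      cases e
      · simp [pw, FreeGroup.of, FreeGroup.invRev]
      · rfl
    rw [h2, ← mul_assoc, ← map_mul, FreeGroup.mul_mk]
    rfl

theorem wl_chain (g : B) (p : ι × Bool) (l : List (B × ι × Bool)) (h : Red p l) :
    List.IsChain (fun a b : (ι × B) × Bool => a.1 = b.1 → a.2 = b.2) (((p.1, g), p.2) :: wl g l) := by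
  induction l generalizing g p with
  | nil => simp [wl]
  | cons a l ih =>
    obtain ⟨b, i, e⟩ := a
    rw [wl, List.isChain_cons_cons]
    refine ⟨?_, ih (g * b) (i, e) h.2⟩
    intro heq
    simp only [Prod.mk.injEq] at heq
    exact h.1 (by simpa using heq.2.symm) heq.1

theorem ev_ne (p : ι × Bool) (l : List (B × ι × Bool)) (h : Red p l) (hl : l ≠ []) (b : B) :
    ev inB tau l * inB b ≠ (1 : GG B ι) := by
  intro hc
  have h1 := toSD_ev (1 : B) l
  rw [map_one, one_mul, eq_inv_of_mul_eq_one_left hc] at h1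
  have h2 := congrArg SemidirectProduct.left h1
  have h3 : toSD ((inB b)⁻¹ : GG B ι) = SemidirectProduct.inr b⁻¹ := by simp [toSD]
  rw [h3] at h2
  simp only [SemidirectProduct.left_inr, SemidirectProduct.mul_left, SemidirectProduct.left_inl,
    SemidirectProduct.right_inl, map_one, mul_one] at h2
  have h4 : FreeGroup.IsReduced (wl 1 l) := (List.isChain_cons.1 (wl_chain 1 p l h)).2
  classical
  have h5 : (FreeGroup.mk (wl 1 l)).toWord = wl 1 l := by
    rw [FreeGroup.toWord_mk, h4.reduce_eq]
  rw [← h2, FreeGroup.toWord_one] at h5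
  cases l with
  | nil => exact hl rfl
  | cons a l => simp [wl] at h5

end words

section collapse
variable {B ι : Type} [Group B]

/-- subgroup generated by `B` and the letters in `S` -/
def CS (S : Set ι) : Subgroup (GG B ι) :=
  Subgroup.closure (Set.range (inB : B →* GG B ι) ∪ tau '' S)

theorem inB_mem (S : Set ι) (b : B) : (inB b : GG B ι) ∈ CS S :=
  Subgroup.subset_closure (Or.inl ⟨b, rfl⟩)

theorem tau_mem {S : Set ι} {i : ι} (h : i ∈ S) : (tau i : GG B ι) ∈ CS S :=
  Subgroup.subset_closure (Or.inr ⟨i, h, rfl⟩)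

theorem pw_mem {D : Type} [Group D] {K : Subgroup D} {t : D} (h : t ∈ K) (e : Bool) :
    pw t e ∈ K := by
  cases e
  · exact K.inv_mem h
  · exact h

theorem CS_mono {S T : Set ι} (h : S ⊆ T) : (CS S : Subgroup (GG B ι)) ≤ CS T :=
  Subgroup.closure_mono (Set.union_subset_union_right _ (Set.image_mono h))

theorem ev_mem {S : Set ι} (l : List (B × ι × Bool)) (h : ∀ a ∈ l, a.2.1 ∈ S) :
    (ev inB tau l : GG B ι) ∈ CS S := by
  induction l with
  | nil => exact Subgroup.one_mem _
  | cons a l ih =>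
    obtain ⟨b, i, e⟩ := a
    exact Subgroup.mul_mem _ (Subgroup.mul_mem _ (inB_mem _ _)
      (pw_mem (tau_mem (h (b, i, e) (by simp))) _))
      (ih (fun a ha => h a (List.mem_cons_of_mem _ ha)))

theorem CS_eqOn {D : Type} [Group D] {S : Set ι} (f g : GG B ι →* D)
    (h1 : ∀ b, f (inB b) = g (inB b)) (h2 : ∀ i ∈ S, f (tau i) = g (tau i)) :
    ∀ x ∈ CS S, f x = g x := by
  have : Set.EqOn f g ((CS S : Subgroup (GG B ι)) : Set (GG B ι)) := by
    apply MonoidHom.eqOn_closure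
    rintro x (⟨b, rfl⟩ | ⟨i, hi, rfl⟩)
    · exact h1 b
    · exact h2 i hi
  exact this

open Classical in
noncomputable def col (h0 : ι) : GG B ι → List (B × ι × Bool) → List (GG B ι × Unit × Bool)
  | _, [] => []
  | acc, (b, h, e) :: l =>
    if h = h0 then (acc * inB b, (), e) :: col h0 1 l
    else col h0 (acc * inB b * pw (tau h) e) l

theorem ev_col {D : Type} [Group D] (h0 : ι) (g k : GG B ι →* D) (s : D)
    (hs : g (tau h0) = s) (hB : ∀ b, g (inB b) = k (inB b))
    (hi : ∀ i ≠ h0, g (tau i) = k (tau i)) (l : List (B × ι × Bool)) (p : ι × Bool)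
    (acc : GG B ι) (hacc : g acc = k acc) (hp : p.1 = h0 → acc = 1) (hl : (lst p l).1 = h0) :
    ev k (fun _ => s) (col h0 acc l) = g acc * g (ev inB tau l) := by
  induction l generalizing p acc with
  | nil =>
    simp [lst] at hl
    simp [col, ev, hp hl]
  | cons a l ih =>
    obtain ⟨b, i, e⟩ := a
    rw [col]
    split_ifs with h
    · subst h
      rw [ev, ih (i, e) 1 (by simp) (fun _ => rfl) hl, ev]
      simp [map_pw, hacc, hB, hs, mul_assoc]
    · rw [ih (i, e) _ (by simp [map_pw, hacc, hB, hi i h]) (fun h' => absurd h' h) hl, ev]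
      simp [mul_assoc]

def Inv (h0 : ι) (acc : GG B ι) (p : ι × Bool) (d : Bool) : Prop :=
  (p = (h0, d) ∧ acc = 1) ∨ (p.1 ≠ h0 ∧ ∃ q w, Red q w ∧ w ≠ [] ∧ lst q w = p ∧ acc = ev inB tau w)

theorem col_red (h0 : ι) (l : List (B × ι × Bool)) (p : ι × Bool) (d : Bool)
    (acc : GG B ι) (hinv : Inv h0 acc p d) (hr : Red p l) (hl : (lst p l).1 = h0) :
    Red ((), d) (col h0 acc l) ∧ lst ((), d) (col h0 acc l) = ((), (lst p l).2) := by
  induction l generalizing p acc d with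
  | nil =>
    refine ⟨trivial, ?_⟩
    rcases hinv with ⟨h1, _⟩ | ⟨h1, _⟩
    · simp [col, lst, h1]
    · exact absurd hl h1
  | cons a l ih =>
    obtain ⟨b, i, e⟩ := a
    rw [col]
    split_ifs with h
    · subst h
      have h2 := ih (i, e) e 1 (Or.inl ⟨rfl, rfl⟩) hr.2 hl
      refine ⟨⟨?_, h2.1⟩, h2.2⟩
      intro h3 _
      rcases hinv with ⟨h4, h5⟩ | ⟨h4, q, w, hq, hw, hlw, hac⟩
      · subst h4
        subst h5
        rw [one_mul] at h3
        refine hr.1 ?_ rfl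
        have := congrArg (glift (MonoidHom.id B) (fun _ => 1)) h3
        simpa using this
      · exact absurd (hac ▸ h3) (ev_ne q w hq hw b)
    · refine ih (i, e) d _ (Or.inr ⟨h, ?_⟩) hr.2 hl
      rcases hinv with ⟨h4, h5⟩ | ⟨h4, q, w, hq, hw, hlw, hac⟩
      · refine ⟨(i, e), [(b, i, e)], ⟨fun _ _ => rfl, trivial⟩, by simp, rfl, ?_⟩
        simp [h5, ev]
      · refine ⟨q, w ++ [(b, i, e)], ?_, by simp, ?_, ?_⟩
        · rw [Red_append, hlw]
          exact ⟨hq, hr.1, trivial⟩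
        · rw [lst_append]; rfl
        · rw [ev_append, hac]; simp [ev, mul_assoc]

open Classical in
theorem col_length (h0 : ι) (l : List (B × ι × Bool)) (acc : GG B ι) :
    (col h0 acc l).length = l.countP (fun a => a.2.1 = h0) := by
  induction l generalizing acc with
  | nil => rfl
  | cons a l ih =>
    obtain ⟨b, i, e⟩ := a
    rw [col]
    split_ifs with h
    · simp [ih, h]
    · simp [ih, h]

def Solv (l : List (B × Unit × Bool)) : Prop :=
  ∃ (D : Type) (_ : Group D) (f : B →* D) (t : D), Injective f ∧ ev f (fun _ => t) l = 1

def PP (n : ℕ) : Prop := ∀ (C : Type) [Group C], LocallyIndicable C →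
  ∀ l : List (C × Unit × Bool), l.length = n → CR l → Solv l

open Classical in
theorem lemT (hB : LocallyIndicable B) (l : List (B × ι × Bool)) (hl : CR l) (h0 : ι)
    (hm : ∃ a ∈ l, a.2.1 = h0) (hP : PP (l.countP (fun a => a.2.1 = h0))) :
    ∃ (D : Type) (_ : Group D) (g : GG B ι →* D), g (ev inB tau l) = 1 ∧
      Set.InjOn g ((CS {i | i ≠ h0} : Subgroup (GG B ι)) : Set (GG B ι)) := by
  obtain ⟨⟨b, i, e⟩, ha, hi⟩ := hm
  simp only at hi
  subst hi
  obtain ⟨l1, l2, rfl⟩ := List.append_of_mem ha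
  have hcr : CR (l2 ++ (l1 ++ [(b, i, e)])) := by
    apply CR_rot
    simpa using hl
  obtain ⟨p, hp1, hp2⟩ := hcr
  have hp : p = (i, e) := by
    rw [← hp1, lst_append, lst_append]; rfl
  subst hp
  obtain ⟨h1, h2⟩ := col_red i _ (i, e) e 1 (Or.inl ⟨rfl, rfl⟩) hp2 (by rw [hp1])
  rw [hp1] at h2
  obtain ⟨D, _, f, s, hf, hev⟩ := hP (GG B ι) (li_GG hB) (col i 1 (l2 ++ (l1 ++ [(b, i, e)]))) (by
    rw [col_length]
    simp
    omega) ⟨((), e), h2, h1⟩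
  let g : GG B ι →* D := glift (f.comp inB) (fun j => if j = i then s else f (tau j))
  have hgi : ∀ j ≠ i, g (tau j) = f (tau j) := by
    intro j hj
    simp [g, hj]
  have hgB : ∀ b, g (inB b) = f (inB b) := by
    intro b
    simp [g]
  rw [ev_col i g f s (by simp [g]) hgB hgi _ (i, e) 1 (by simp) (fun _ => rfl) (by rw [hp1]),
    map_one, one_mul, map_ev] at hev
  refine ⟨D, inferInstance, g, ?_, ?_⟩
  · rw [map_ev]
    have := ev_rot _ _ _ _ hev
    simpa using this
  · intro x hx y hy hxy
    have h3 := CS_eqOn g f hgB hgi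
    rw [h3 x hx, h3 y hy] at hxy
    exact hf hxy

end collapse

section core
variable {B : Type} [Group B]

theorem quot_inj {G : Type} [Group G] (r : G) (K : Subgroup G)
    (h : ∃ (D : Type) (_ : Group D) (g : G →* D), g r = 1 ∧ Set.InjOn g (K : Set G)) :
    Set.InjOn (QuotientGroup.mk' (Subgroup.normalClosure {r})) (K : Set G) := by
  obtain ⟨D, _, g, hg, hinj⟩ := h
  intro x hx y hy hxy
  apply hinj hx hy
  have h1 : x⁻¹ * y ∈ Subgroup.normalClosure {r} := QuotientGroup.eq.1 hxy
  have h2 : Subgroup.normalClosure {r} ≤ g.ker := by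
    apply Subgroup.normalClosure_le_normal
    simpa using hg
  have h3 : g (x⁻¹ * y) = 1 := h2 h1
  rw [map_mul, map_inv, inv_mul_eq_one] at h3
  exact h3

def shift (j : ℤ) (L : List (B × ℤ × Bool)) : List (B × ℤ × Bool) :=
  L.map (fun a => (a.1, a.2.1 + j, a.2.2))

theorem ev_shift {D : Type} [Group D] (f : B →* D) (x : ℤ → D) (j : ℤ) (L : List (B × ℤ × Bool)) :
    ev f x (shift j L) = ev f (fun h => x (h + j)) L := by
  induction L with
  | nil => rfl
  | cons a l ih =>
    obtain ⟨b, i, e⟩ := a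
    have : shift j ((b, i, e) :: l) = (b, i + j, e) :: shift j l := rfl
    rw [this, ev, ev, ih]

theorem lst_shift (j : ℤ) (p : ℤ × Bool) (L : List (B × ℤ × Bool)) :
    lst (p.1 + j, p.2) (shift j L) = ((lst p L).1 + j, (lst p L).2) := by
  induction L generalizing p with
  | nil => rfl
  | cons a l ih => exact ih a.2

theorem Red_shift (j : ℤ) (p : ℤ × Bool) (L : List (B × ℤ × Bool)) (h : Red p L) :
    Red (p.1 + j, p.2) (shift j L) := by
  induction L generalizing p with
  | nil => trivial
  | cons a l ih =>
    refine ⟨?_, ih a.2 h.2⟩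
    intro h1 h2
    exact h.1 h1 (by simpa using h2)

theorem CR_shift (j : ℤ) (L : List (B × ℤ × Bool)) (h : CR L) : CR (shift j L) := by
  obtain ⟨p, hp, hr⟩ := h
  refine ⟨(p.1 + j, p.2), ?_, Red_shift j p L hr⟩
  rw [lst_shift, hp]

theorem window (L : List (B × ℤ × Bool)) (lo hi : ℤ) (hlh : lo < hi)
    (hL : ∀ a ∈ L, lo ≤ a.2.1 ∧ a.2.1 ≤ hi)
    (hlo : ∀ j : ℤ, Set.InjOn (QuotientGroup.mk' (Subgroup.normalClosure {ev inB tau (shift j L)}))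
      ((CS {i | i ≠ lo + j} : Subgroup (GG B ℤ)) : Set (GG B ℤ)))
    (hhi : ∀ j : ℤ, Set.InjOn (QuotientGroup.mk' (Subgroup.normalClosure {ev inB tau (shift j L)}))
      ((CS {i | i ≠ hi + j} : Subgroup (GG B ℤ)) : Set (GG B ℤ))) (a : ℤ) (k : ℕ) :
    ∃ (D : Type) (_ : Group D) (f : GG B ℤ →* D),
      (∀ j : ℕ, j < k → f (ev inB tau (shift (a + j) L)) = 1) ∧
      Set.InjOn f ((CS (Set.Ico (lo + a + k) (hi + a + k)) : Subgroup (GG B ℤ)) : Set (GG B ℤ)) := by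
  induction k with
  | zero => exact ⟨GG B ℤ, inferInstance, MonoidHom.id _, by simp, fun x _ y _ h => h⟩
  | succ k ih =>
    obtain ⟨D, _, f, hf, hfi⟩ := ih
    let c : ℤ := a + k
    let W := GG B ℤ ⧸ Subgroup.normalClosure {(ev inB tau (shift c L) : GG B ℤ)}
    let g : GG B ℤ →* W := QuotientGroup.mk' _
    have hg : g (ev inB tau (shift c L)) = 1 := by
      rw [← MonoidHom.mem_ker, QuotientGroup.ker_mk']
      exact Subgroup.subset_normalClosure rfl
    let C : Subgroup (GG B ℤ) := CS (Set.Ico (lo + a + k) (hi + a + k))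
    obtain ⟨E, _, g1, g2, hg1, hg2, hc⟩ := amalg (f.comp C.subtype) (g.comp C.subtype)
      (by
        intro x y h
        exact Subtype.ext (hfi x.2 y.2 h))
      (by
        intro x y h
        refine Subtype.ext (hhi c (CS_mono ?_ x.2) (CS_mono ?_ y.2) h) <;>
        · intro i hi
          simp only [Set.mem_Ico, Set.mem_setOf_eq] at *
          simp only [c]
          omega)
    have hc' : ∀ x ∈ C, g1 (f x) = g2 (g x) := fun x hx => hc ⟨x, hx⟩
    let F : GG B ℤ →* E := glift ((g1.comp f).comp inB)
      (fun i => if i < hi + a + k then g1 (f (tau i)) else g2 (g (tau i)))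
    have hF1 : ∀ x ∈ CS (Set.Iio (hi + a + k)), F x = (g1.comp f) x := by
      apply CS_eqOn
      · intro b; simp [F]
      · intro i hi'
        simp only [Set.mem_Iio] at hi'
        simp [F, hi']
    have hF2 : ∀ x ∈ CS (Set.Ici (lo + a + k)), F x = (g2.comp g) x := by
      apply CS_eqOn
      · intro b
        simp only [F, glift_inB, MonoidHom.comp_apply]
        exact hc' _ (inB_mem _ _)
      · intro i hi'
        simp only [Set.mem_Ici] at hi'
        by_cases h : i < hi + a + k
        · simp only [F, glift_tau, h, if_true, MonoidHom.comp_apply]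
          exact hc' _ (tau_mem ⟨hi', h⟩)
        · simp [F, h]
    refine ⟨E, inferInstance, F, ?_, ?_⟩
    · intro j hj
      rcases Nat.lt_succ_iff_lt_or_eq.1 hj with h | h
      · rw [hF1]
        · simp [hf j h]
        · apply ev_mem
          intro x hx
          simp only [shift, List.mem_map] at hx
          obtain ⟨y, hy, rfl⟩ := hx
          have := hL y hy
          simp only [Set.mem_Iio]
          omega
      · subst h
        rw [hF2]
        · simp only [MonoidHom.comp_apply]
          rw [hg, map_one]
        · apply ev_mem
          intro x hx
          simp only [shift, List.mem_map] at hx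
          obtain ⟨y, hy, rfl⟩ := hx
          have := hL y hy
          simp only [Set.mem_Ici]
          omega
    · have hsub : (CS (Set.Ico (lo + a + (k + 1 : ℕ)) (hi + a + (k + 1 : ℕ))) : Subgroup (GG B ℤ)) ≤
          CS (Set.Ici (lo + a + k)) := by
        apply CS_mono
        intro i hi'
        simp only [Set.mem_Ico, Set.mem_Ici] at *
        push_cast at hi'
        omega
      have hsub2 : (CS (Set.Ico (lo + a + (k + 1 : ℕ)) (hi + a + (k + 1 : ℕ))) : Subgroup (GG B ℤ)) ≤
          CS {i | i ≠ lo + c} := by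
        apply CS_mono
        intro i hi'
        simp only [Set.mem_Ico, Set.mem_setOf_eq, c] at *
        push_cast at hi'
        omega
      intro x hx y hy hxy
      rw [hF2 x (hsub hx), hF2 y (hsub hy)] at hxy
      exact hlo c (hsub2 hx) (hsub2 hy) (hg2 hxy)

def rel (L : List (B × ℤ × Bool)) (j : ℤ) : GG B ℤ := ev inB tau (shift j L)

theorem mem_window (R : ℤ → GG B ℤ) (x : GG B ℤ) (hx : x ∈ Subgroup.normalClosure (Set.range R)) :
    ∃ k : ℕ, x ∈ Subgroup.normalClosure (R '' Set.Ico (-(k:ℤ)) k) := by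
  have hmono : ∀ k m : ℕ, k ≤ m → Subgroup.normalClosure (R '' Set.Ico (-(k:ℤ)) k) ≤
      Subgroup.normalClosure (R '' Set.Ico (-(m:ℤ)) m) := by
    intro k m h
    apply Subgroup.normalClosure_mono
    apply Set.image_mono
    apply Set.Ico_subset_Ico <;> omega
  unfold Subgroup.normalClosure at hx
  induction hx using Subgroup.closure_induction with
  | mem x hx =>
    obtain ⟨y, ⟨j, rfl⟩, hc⟩ := Group.mem_conjugatesOfSet_iff.1 hx
    refine ⟨j.natAbs + 1, ?_⟩
    apply Subgroup.conjugatesOfSet_subset_normalClosure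
    refine Group.mem_conjugatesOfSet_iff.2 ⟨R j, ⟨j, ?_, rfl⟩, hc⟩
    simp only [Set.mem_Ico]
    omega
  | one => exact ⟨0, Subgroup.one_mem _⟩
  | mul x y _ _ hx hy =>
    obtain ⟨k, hk⟩ := hx
    obtain ⟨m, hm⟩ := hy
    exact ⟨max k m, Subgroup.mul_mem _ (hmono _ _ (le_max_left _ _) hk)
      (hmono _ _ (le_max_right _ _) hm)⟩
  | inv x _ hx =>
    obtain ⟨k, hk⟩ := hx
    exact ⟨k, Subgroup.inv_mem _ hk⟩

def sig : GG B ℤ →* GG B ℤ := glift inB (fun i => tau (i + 1))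
def sigi : GG B ℤ →* GG B ℤ := glift inB (fun i => tau (i - 1))

def sigE : GG B ℤ ≃* GG B ℤ :=
  MonoidHom.toMulEquiv sig sigi
    (by apply ghom_ext <;> intro x <;> simp [sig, sigi])
    (by apply ghom_ext <;> intro x <;> simp [sig, sigi])

theorem sigE_tau (i : ℤ) : sigE (tau i : GG B ℤ) = tau (i + 1) := by
  simp [sigE, sig]
theorem sigE_inB (b : B) : sigE (inB b : GG B ℤ) = inB b := by
  simp [sigE, sig]
theorem sigE_rel (L : List (B × ℤ × Bool)) (j : ℤ) : sigE (rel L j) = rel L (j + 1) := by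
  have h : (sigE (rel L j) : GG B ℤ) = sig (rel L j) := rfl
  rw [h, rel, map_ev, rel, ev_shift, ev_shift]
  have h1 : (sig.comp inB : B →* GG B ℤ) = inB := by ext b; simp [sig]
  rw [h1]
  congr 1
  funext i
  simp [sig, add_assoc]

theorem core_build (L : List (B × ℤ × Bool))
    (hinj : ∀ b : B, inB b ∈ Subgroup.normalClosure (Set.range (rel L)) → b = 1) :
    ∃ (D : Type) (_ : Group D) (f : B →* D) (z τ : D), (∀ b, z * f b = f b * z) ∧
      (∀ b (k : ℤ), f b * z ^ k = 1 → b = 1 ∧ k = 0) ∧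
      ev f (fun h : ℤ => z ^ h * τ * (z ^ h)⁻¹) L = 1 := by
  let N := Subgroup.normalClosure (Set.range (rel L))
  let M := GG B ℤ ⧸ N
  have hN : N.map (sigE : GG B ℤ ≃* GG B ℤ).toMonoidHom = N := by
    have h1 := Subgroup.map_normalClosure (Set.range (rel L)) (sigE : GG B ℤ ≃* GG B ℤ).toMonoidHom
      (sigE : GG B ℤ ≃* GG B ℤ).surjective
    change Subgroup.map _ (Subgroup.normalClosure _) = Subgroup.normalClosure _
    rw [h1]
    congr 1
    ext x
    simp only [Set.mem_image, Set.mem_range, exists_exists_eq_and]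
    constructor
    · rintro ⟨j, rfl⟩
      exact ⟨j + 1, (sigE_rel L j).symm⟩
    · rintro ⟨j, rfl⟩
      refine ⟨j - 1, ?_⟩
      have := sigE_rel L (j - 1)
      rw [sub_add_cancel] at this
      exact this
  let s : MulAut M := QuotientGroup.congr N N sigE hN
  have hs : ∀ x : GG B ℤ, s (QuotientGroup.mk' N x) = QuotientGroup.mk' N (sigE x) := fun x => rfl
  let act' : Multiplicative ℤ →* MulAut M := zpowersHom (MulAut M) s
  let z : M ⋊[act'] Multiplicative ℤ := SemidirectProduct.inr (Multiplicative.ofAdd 1)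
  have hz : ∀ x : M, z * SemidirectProduct.inl x * z⁻¹ = SemidirectProduct.inl (s x) := by
    intro x
    have h := SemidirectProduct.inl_aut (φ := act') (Multiplicative.ofAdd 1) x
    have h2 : act' (Multiplicative.ofAdd 1) = s := by simp [act']
    rw [h2, map_inv] at h
    exact h.symm
  let π : GG B ℤ →* M ⋊[act'] Multiplicative ℤ := SemidirectProduct.inl.comp (QuotientGroup.mk' N)
  have hπ : ∀ x, z * π x * z⁻¹ = π (sigE x) := by
    intro x
    exact (hz _).trans (congrArg _ (hs x))
  have hτ : ∀ i : ℤ, z ^ i * π (tau 0) * (z ^ i)⁻¹ = π (tau i) := by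
    intro i
    induction i using Int.induction_on with
    | zero => simp
    | succ i ih =>
      rw [← sigE_tau, ← hπ, ← ih, add_comm, zpow_add]
      simp [mul_assoc]
    | pred i ih =>
      have h1 := hπ (tau (-(i:ℤ) - 1))
      rw [sigE_tau, sub_add_cancel, ← ih] at h1
      have h2 : π (tau (-(i:ℤ) - 1)) = z⁻¹ * (z * π (tau (-(i:ℤ) - 1)) * z⁻¹) * z := by
        simp [mul_assoc]
      rw [h2, h1, sub_eq_neg_add, zpow_add]
      simp [mul_assoc]
  refine ⟨M ⋊[act'] Multiplicative ℤ, inferInstance, π.comp inB, z, π (tau 0), ?_, ?_, ?_⟩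
  · intro b
    have := hπ (inB b)
    rw [sigE_inB] at this
    exact mul_inv_eq_iff_eq_mul.1 this
  · intro b k h
    have h1 := congrArg SemidirectProduct.right h
    have h2 : z ^ k = SemidirectProduct.inr (Multiplicative.ofAdd k) := by
      simp only [z, ← map_zpow]
      congr 1
      simp [← ofAdd_zsmul]
    rw [h2] at h1
    simp [π] at h1
    have hk : k = 0 := h1
    refine ⟨?_, hk⟩
    subst hk
    rw [zpow_zero, mul_one] at h
    apply hinj
    have h3 : QuotientGroup.mk' N (inB b) = 1 := by
      apply SemidirectProduct.inl_injective (φ := act')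
      rw [map_one]
      exact h
    rw [← MonoidHom.mem_ker, QuotientGroup.ker_mk'] at h3
    exact h3
  · have h1 : (fun h : ℤ => z ^ h * π (tau 0) * (z ^ h)⁻¹) = fun h => π (tau h) := funext hτ
    rw [h1, ← map_ev]
    have h2 : (ev inB tau L : GG B ℤ) = rel L 0 := by
      rw [rel, ev_shift]
      simp
    rw [h2]
    have h3 : QuotientGroup.mk' N (rel L 0) = 1 := by
      rw [← MonoidHom.mem_ker, QuotientGroup.ker_mk']
      exact Subgroup.subset_normalClosure ⟨0, rfl⟩
    simp only [π, MonoidHom.comp_apply, h3, map_one]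

theorem core (hB : LocallyIndicable B) (n : ℕ) (IH : ∀ k < n, PP k) (L : List (B × ℤ × Bool))
    (hn : L.length = n) (hL : CR L) (hne : ∃ a ∈ L, ∃ a' ∈ L, a.2.1 ≠ a'.2.1) :
    ∃ (D : Type) (_ : Group D) (f : B →* D) (z τ : D), (∀ b, z * f b = f b * z) ∧
      (∀ b (k : ℤ), f b * z ^ k = 1 → b = 1 ∧ k = 0) ∧
      ev f (fun h : ℤ => z ^ h * τ * (z ^ h)⁻¹) L = 1 := by
  classical
  apply core_build
  obtain ⟨a, ha, a', ha', haa⟩ := hne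
  let S : Finset ℤ := (L.map (fun a => a.2.1)).toFinset
  have hS : ∀ x, x ∈ S ↔ ∃ a ∈ L, a.2.1 = x := by
    intro x; simp [S]
  have hSne : S.Nonempty := ⟨a.2.1, (hS _).2 ⟨a, ha, rfl⟩⟩
  have hbd : ∀ x ∈ L, S.min' hSne ≤ x.2.1 ∧ x.2.1 ≤ S.max' hSne := fun x hx =>
    ⟨S.min'_le _ ((hS _).2 ⟨x, hx, rfl⟩), S.le_max' _ ((hS _).2 ⟨x, hx, rfl⟩)⟩
  have hlt : S.min' hSne < S.max' hSne := by
    have := hbd a ha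
    have := hbd a' ha'
    omega
  have key : ∀ h0 ∈ S, ∀ j : ℤ,
      Set.InjOn (QuotientGroup.mk' (Subgroup.normalClosure {ev inB tau (shift j L)}))
      ((CS {i | i ≠ h0 + j} : Subgroup (GG B ℤ)) : Set (GG B ℤ)) := by
    intro h0 hh0 j
    obtain ⟨x, hx, hxh⟩ := (hS _).1 hh0
    apply quot_inj
    apply lemT hB _ (CR_shift j L hL)
    · refine ⟨(x.1, x.2.1 + j, x.2.2), ?_, by simp [hxh]⟩
      simp only [shift, List.mem_map]
      exact ⟨x, hx, rfl⟩
    · apply IH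
      rw [← hn]
      have hlen : L.length = (shift j L).length := by simp [shift]
      rw [hlen]
      refine lt_of_le_of_ne List.countP_le_length ?_
      intro heq
      rw [List.countP_eq_length] at heq
      have e1 := heq (a.1, a.2.1 + j, a.2.2) (List.mem_map.2 ⟨a, ha, rfl⟩)
      have e2 := heq (a'.1, a'.2.1 + j, a'.2.2) (List.mem_map.2 ⟨a', ha', rfl⟩)
      simp at e1 e2
      exact haa (e1.trans e2.symm)
  intro b hb
  obtain ⟨k, hk⟩ := mem_window _ _ hb
  obtain ⟨D, _, f, hf, hfi⟩ := window L _ _ hlt hbd (key _ (S.min'_mem hSne))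
    (key _ (S.max'_mem hSne)) (-(k:ℤ)) (2 * k)
  have h1 : Subgroup.normalClosure (rel L '' Set.Ico (-(k:ℤ)) k) ≤ f.ker := by
    apply Subgroup.normalClosure_le_normal
    rintro _ ⟨j, hj, rfl⟩
    have h2 := hf (j + k).toNat (by simp only [Set.mem_Ico] at hj; omega)
    have h3 : -(k:ℤ) + ((j + k).toNat : ℤ) = j := by simp only [Set.mem_Ico] at hj; omega
    rw [h3] at h2
    exact h2
  have h2 : f (inB b) = f 1 := by
    rw [map_one]; exact h1 hk
  have h3 := hfi (inB_mem _ b) (Subgroup.one_mem _) h2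
  have := congrArg (glift (MonoidHom.id B) (fun _ => 1)) h3
  simpa using this

end core

section levels
variable {B : Type} [Group B]

def lev (v : Bool → B → ℤ) (m : ℤ) : ℤ → List (B × Unit × Bool) → List (B × ℤ × Bool)
  | _, [] => []
  | k, (b, _, e) :: l =>
    (b, k + v e b - cond e 0 m, e) :: lev v m (k + v e b + cond e m (-m)) l

def tot (v : Bool → B → ℤ) (m : ℤ) : List (B × Unit × Bool) → ℤ
  | [] => 0
  | (b, _, e) :: l => v e b + cond e m (-m) + tot v m l

/-- the twisted product -/
def pr {D : Type} [Group D] (f : B →* D) (z τ : D) (v : Bool → B → ℤ) (m : ℤ) :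
    List (B × Unit × Bool) → D
  | [] => 1
  | (b, _, e) :: l => f b * z ^ (v e b) * pw (τ * z ^ m) e * pr f z τ v m l

theorem lev_length (v : Bool → B → ℤ) (m k : ℤ) (l : List (B × Unit × Bool)) :
    (lev v m k l).length = l.length := by
  induction l generalizing k with
  | nil => rfl
  | cons a l ih => obtain ⟨b, u, e⟩ := a; simp [lev, ih]

theorem lev_red (v : Bool → B → ℤ) (m k : ℤ) (l : List (B × Unit × Bool)) (H : ℤ) (d : Bool)
    (h : Red ((), d) l) : Red (H, d) (lev v m k l) := by
  induction l generalizing k H d with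
  | nil => trivial
  | cons a l ih =>
    obtain ⟨b, u, e⟩ := a
    exact ⟨fun h1 _ => h.1 h1 rfl, ih _ _ _ h.2⟩

theorem lev_lst (v : Bool → B → ℤ) (m k : ℤ) (l : List (B × Unit × Bool)) (H : ℤ) (d : Bool) :
    (lst (H, d) (lev v m k l)).2 = (lst ((), d) l).2 := by
  induction l generalizing k H d with
  | nil => rfl
  | cons a l ih =>
    obtain ⟨b, u, e⟩ := a
    exact ih _ _ _

theorem lev_CR (v : Bool → B → ℤ) (m k : ℤ) (l : List (B × Unit × Bool)) (h : CR l) :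
    CR (lev v m k l) := by
  obtain ⟨⟨u, d⟩, hp, hr⟩ := h
  refine ⟨lst (0, d) (lev v m k l), lst_lst _ _, ?_⟩
  have h1 := lev_lst v m k l 0 d
  rw [hp] at h1
  have := lev_red v m k l (lst (0, d) (lev v m k l)).1 d hr
  convert this using 2

theorem lev_fin (v : Bool → B → ℤ) (m k : ℤ) (l : List (B × Unit × Bool)) (H : ℤ) (d : Bool)
    (hl : H + cond d m 0 = k) :
    k + tot v m l = (lst (H, d) (lev v m k l)).1 + cond (lst (H, d) (lev v m k l)).2 m 0 := by
  induction l generalizing k H d with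
  | nil => simp [tot, lev, lst, hl]
  | cons a l ih =>
    obtain ⟨b, u, e⟩ := a
    have := ih (k + v e b + cond e m (-m)) (k + v e b - cond e 0 m) e (by cases e <;> simp; ring)
    simp only [tot, lev, lst]
    rw [← this]
    ring

theorem lev_const (v : Bool → B → ℤ) (c : ℤ) (l : List (B × Unit × Bool))
    (h : ∀ a ∈ lev v 0 c l, a.2.1 = c) : ∀ a ∈ l, v a.2.2 a.1 = 0 := by
  induction l with
  | nil => simp
  | cons a l ih =>
    obtain ⟨b, u, e⟩ := a
    have h1 := h (b, c + v e b - cond e 0 0, e) (by simp [lev])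
    have h2 : v e b = 0 := by cases e <;> simpa using h1
    have h3 : lev v 0 c ((b, u, e) :: l) = (b, c, e) :: lev v 0 c l := by
      cases e <;> simp [lev, h2]
    rw [h3] at h
    intro a ha
    rcases List.mem_cons.1 ha with rfl | ha
    · exact h2
    · exact ih (fun a ha => h a (List.mem_cons_of_mem _ ha)) a ha

theorem lev_prod {D : Type} [Group D] (f : B →* D) (z τ : D) (hz : ∀ b, z * f b = f b * z)
    (v : Bool → B → ℤ) (m k : ℤ) (l : List (B × Unit × Bool)) :
    z ^ k * pr f z τ v m l =
      ev f (fun h : ℤ => z ^ h * τ * (z ^ h)⁻¹) (lev v m k l) * z ^ (k + tot v m l) := by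
  induction l generalizing k with
  | nil => simp [pr, lev, ev, tot]
  | cons a l ih =>
    obtain ⟨b, u, e⟩ := a
    have hc : z ^ k * f b = f b * z ^ k := (Commute.zpow_left (hz b) k)
    have := ih (k + v e b + cond e m (-m))
    simp only [pr, lev, ev, tot]
    have e1 : k + (v e b + cond e m (-m) + tot v m l) =
      k + v e b + cond e m (-m) + tot v m l := by ring
    rw [e1, mul_assoc (f b * pw _ e), ← this]
    simp only [← mul_assoc]
    rw [hc]
    congr 1
    cases e
    · simp only [pw, cond_false, mul_inv_rev, inv_inv]
      simp only [mul_assoc, ← zpow_neg, ← zpow_add]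
      rw [← mul_assoc (z ^ (k + v false b)), ← zpow_add]
      have : -(k + v false b - m) + (k + v false b + -m) = 0 := by ring
      rw [this, zpow_zero, mul_one, sub_eq_add_neg]
    · simp only [pw, cond_true]
      simp only [mul_assoc, ← zpow_neg, ← zpow_add]
      rw [sub_zero, neg_add_cancel_left]

theorem core2 (hB : LocallyIndicable B) (n : ℕ) (IH : ∀ k < n, PP k)
    (l : List (B × Unit × Bool)) (hn : l.length = n) (hl : CR l) (v : Bool → B → ℤ) (m : ℤ)
    (ht : tot v m l = 0)
    (hne : ¬ ∃ c, ∀ a ∈ lev v m 0 l, a.2.1 = c) :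
    ∃ (D : Type) (_ : Group D) (f : B →* D) (z τ : D), (∀ b, z * f b = f b * z) ∧
      (∀ b (k : ℤ), f b * z ^ k = 1 → b = 1 ∧ k = 0) ∧ pr f z τ v m l = 1 := by
  obtain ⟨D, _, f, z, τ, h1, h2, h3⟩ := core hB n IH (lev v m 0 l) ((lev_length _ _ _ _).trans hn)
    (lev_CR v m 0 l hl) (by
      by_contra! hcon
      apply hne
      cases hh : lev v m 0 l with
      | nil => exact ⟨0, by simp⟩
      | cons a L =>
        exact ⟨a.2.1, fun a' ha' => hcon a' (by rw [hh]; exact ha') a (by simp [hh])⟩)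
  refine ⟨D, _, f, z, τ, h1, h2, ?_⟩
  have := lev_prod f z τ h1 v m 0 l
  simpa [ht, h3] using this

end levels

section caseA
variable {B : Type} [Group B]

open Classical in
/-- extension by zero of an additive character -/
noncomputable def hat (K : Subgroup B) (φ : K →* Multiplicative ℤ) (b : B) : ℤ :=
  if h : b ∈ K then Multiplicative.toAdd (φ ⟨b, h⟩) else 0

theorem hat_of (K : Subgroup B) (φ : K →* Multiplicative ℤ) (x : K) :
    hat K φ x = Multiplicative.toAdd (φ x) := by
  simp [hat]

theorem twist {D : Type} [Group D] (f : B →* D) (z : D) (hz : ∀ b, z * f b = f b * z)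
    (hi : ∀ b (k : ℤ), f b * z ^ k = 1 → b = 1 ∧ k = 0)
    (K : Subgroup B) (φ : K →* Multiplicative ℤ) (c : ℤ) :
    ∃ j : K →* D, Injective j ∧ ∀ x : K, j x = f x * z ^ (c * hat K φ x) := by
  let j : K →* D :=
    { toFun := fun x => f x * z ^ (c * Multiplicative.toAdd (φ x))
      map_one' := by simp
      map_mul' := by
        intro x y
        have hc : z ^ (c * Multiplicative.toAdd (φ x)) * f y
          = f y * z ^ (c * Multiplicative.toAdd (φ x)) := Commute.zpow_left (hz y) _
        rw [map_mul, toAdd_mul, mul_add, zpow_add, Subgroup.coe_mul, map_mul]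
        simp only [mul_assoc]
        rw [← mul_assoc (z ^ _) (f y), hc]
        simp only [mul_assoc] }
  refine ⟨j, ?_, fun x => by rw [hat_of]; rfl⟩
  rw [injective_iff_map_eq_one]
  intro x hx
  exact Subtype.ext (hi _ _ hx).1

theorem pr_ev {D E : Type} [Group D] [Group E] (f : B →* D) (z τ : D) (v : Bool → B → ℤ) (m : ℤ)
    (g1 : B →* E) (g2 : D →* E) (l : List (B × Unit × Bool))
    (h : ∀ a ∈ l, g1 a.1 = g2 (f a.1 * z ^ (v a.2.2 a.1))) :
    ev g1 (fun _ => g2 (τ * z ^ m)) l = g2 (pr f z τ v m l) := by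
  induction l with
  | nil => simp [ev, pr]
  | cons a l ih =>
    have h1 := h a (by simp)
    obtain ⟨b, u, e⟩ := a
    rw [ev, pr, ih (fun a ha => h a (List.mem_cons_of_mem _ ha)), map_mul g2 (_ * pw _ e),
      map_mul g2 _ (pw _ e), map_pw, h1]

theorem ev_triv (l : List (B × Unit × Bool)) (h : ∀ a ∈ l, a.1 = 1) :
    ev (MonoidHom.id B) (fun _ => (1 : B)) l = 1 := by
  induction l with
  | nil => rfl
  | cons a l ih =>
    have h1 := h a (by simp)
    obtain ⟨b, u, e⟩ := a
    simp only at h1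
    rw [ev, ih (fun a ha => h a (List.mem_cons_of_mem _ ha)), h1]
    cases e <;> simp [pw]

theorem tot_lin (w : Bool → B → ℤ) (c : Bool → ℤ) (m : ℤ) (l : List (B × Unit × Bool)) :
    tot (fun e b => c e * w e b) m l =
      c true * tot (fun e b => cond e (w e b) 0) 0 l
      + c false * tot (fun e b => cond e 0 (w e b)) 0 l + m * tot (fun _ _ => 0) 1 l := by
  induction l with
  | nil => simp [tot]
  | cons a l ih =>
    obtain ⟨b, u, e⟩ := a
    simp only [tot]
    rw [ih]
    cases e <;> simp <;> ring

theorem fin_coeff (l : List (B × Unit × Bool)) (P : B × Unit × Bool → Prop) :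
    {b : B | ∃ a ∈ l, P a ∧ a.1 = b}.Finite := by
  refine ((l.map Prod.fst).finite_toSet).subset ?_
  rintro b ⟨a, ha, _, rfl⟩
  exact List.mem_map_of_mem ha

theorem caseA (hB : LocallyIndicable B) (n : ℕ) (IH : ∀ k < n, PP k)
    (l' : List (B × Unit × Bool)) (l : List (B × Unit × Bool)) (hl' : l = (1, (), true) :: l')
    (hn : l.length = n) (hl : CR l) (hlast : (lst ((), true) l).2 = true) : Solv l := by
  by_cases hall : ∀ a ∈ l, a.1 = 1
  · exact ⟨B, _, MonoidHom.id B, 1, fun _ _ h => h, ev_triv l hall⟩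
  push Not at hall
  obtain ⟨a0, ha0, ha1⟩ := hall
  obtain ⟨K, φ, hmem, a1, hc1, hne⟩ : ∃ (K : Subgroup B) (φ : K →* Multiplicative ℤ),
      (∀ a ∈ l, a.1 ∈ K) ∧ ∃ a1 ∈ l, hat K φ a1.1 ≠ 0 := by
    obtain ⟨φ, c0, ⟨a1, hc1, hc3, rfl⟩, hc2⟩ := li_aux hB {b : B | ∃ a ∈ l, True ∧ a.1 = b}
      (fin_coeff l _) (b := a0.1) ⟨a0, ha0, trivial, rfl⟩ ha1
    refine ⟨_, φ, fun a ha => Subgroup.subset_closure ⟨a, ha, trivial, rfl⟩, a1, hc1, ?_⟩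
    rw [hat_of _ φ ⟨a1.1, Subgroup.subset_closure ⟨a1, hc1, hc3, rfl⟩⟩]
    intro h
    exact hc2 (Multiplicative.toAdd.injective h)
  obtain ⟨c, m, ht, hcm⟩ : ∃ c m : ℤ, tot (fun _ b => c * hat K φ b) m l = 0 ∧
      (m = 0 → c ≠ 0) := by
    have := fun c m => tot_lin (fun _ b => hat K φ b) (fun _ => c) m l
    simp only [← mul_add] at this
    set S := tot (fun e b => cond e (hat K φ b) 0) 0 l + tot (fun e b => cond e 0 (hat K φ b)) 0 l
    set E := tot (fun _ _ => 0) 1 l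
    by_cases hE : E = 0
    · exact ⟨0, 1, by rw [this, hE]; simp, by simp⟩
    · exact ⟨E, -S, by rw [this]; ring, fun _ => hE⟩
  obtain ⟨D, _, f, z, τ, h1, h2, h3⟩ := core2 hB n IH l hn hl (fun _ b => c * hat K φ b) m ht (by
    rintro ⟨k, hk⟩
    have hk0 : k = 0 := by
      rw [← hk (1, 0 + c * hat K φ 1 - 0, true) (by simp [hl', lev])]
      have := hat_of K φ 1
      simp at this
      simp [this]
    subst hk0
    have hlf := lev_fin (fun _ b => c * hat K φ b) m 0 l (-m) true (by simp)
    rw [lev_lst, hlast, ht] at hlf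
    obtain ⟨b, hb⟩ := lst_mem (-m, true) (lev (fun _ b => c * hat K φ b) m 0 l) (by
      rw [hl']; simp [lev])
    rw [hk _ hb] at hlf
    have hm : m = 0 := by simpa using hlf.symm
    subst hm
    have := lev_const _ _ _ hk a1 hc1
    simp only [mul_eq_zero] at this
    exact this.elim (hcm rfl) hne)
  obtain ⟨j, hj, hj2⟩ := twist f z h1 h2 K φ c
  obtain ⟨E, _, g1, g2, hg1, hg2, hg⟩ := amalg K.subtype j K.subtype_injective hj
  refine ⟨E, _, g1, g2 (τ * z ^ m), hg1, ?_⟩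
  rw [pr_ev f z τ (fun _ b => c * hat K φ b) m g1 g2 l, h3, map_one]
  intro a ha
  have := hg ⟨a.1, hmem a ha⟩
  rw [hj2] at this
  exact this

end caseA

section caseB
variable {B : Type} [Group B]

def Alt (d : Bool) : List (B × Unit × Bool) → Prop
  | [] => True
  | a :: l => d ≠ a.2.2 ∧ Alt a.2.2 l

theorem Alt_of (d : Bool) (l : List (B × Unit × Bool))
    (h : ∀ l1 a l2, l = l1 ++ a :: l2 → (lst ((), d) l1).2 ≠ a.2.2) : Alt d l := by
  induction l generalizing d with
  | nil => trivial
  | cons a l ih =>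
    refine ⟨h [] a l rfl, ih _ ?_⟩
    intro l1 c l2 hl
    exact h (a :: l1) c l2 (by rw [hl]; rfl)

theorem Alt_ne (d : Bool) (l : List (B × Unit × Bool)) (h : Alt d l) (hr : Red ((), d) l) :
    ∀ a ∈ l, a.1 ≠ 1 := by
  induction l generalizing d with
  | nil => simp
  | cons a l ih =>
    intro c hc
    rcases List.mem_cons.1 hc with rfl | hc
    · intro h1
      exact h.1 (hr.1 h1 rfl)
    · exact ih _ h.2 hr.2 c hc

theorem tele {D E : Type} [Group D] [Group E] (f : B →* D) (z τ : D) (v : Bool → B → ℤ)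
    (F : B →* E) (g : D →* E) (t : E) (d : Bool) (l : List (B × Unit × Bool)) (ha : Alt d l)
    (ht : ∀ a ∈ l, a.2.2 = true → F a.1 = g (f a.1 * z ^ (v true a.1)))
    (hf : ∀ a ∈ l, a.2.2 = false →
      t * F a.1 * t⁻¹ = g (τ * (f a.1 * z ^ (v false a.1)) * τ⁻¹)) :
    cond d t 1 * ev F (fun _ => t) l * (cond (lst ((), d) l).2 t 1)⁻¹ =
      g (cond d τ 1 * pr f z τ v 0 l * (cond (lst ((), d) l).2 τ 1)⁻¹) := by
  induction l generalizing d with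
  | nil => simp [ev, pr, lst]
  | cons a l ih =>
    have h1 := ht a (by simp)
    have h2 := hf a (by simp)
    have ih' := ih a.2.2 ha.2 (fun a ha => ht a (List.mem_cons_of_mem _ ha))
      (fun a ha => hf a (List.mem_cons_of_mem _ ha))
    have h0 := ha.1
    obtain ⟨b, u, e⟩ := a
    simp only [lst, ev, pr] at *
    have e0 : (u, e) = ((), e) := rfl
    rw [e0]
    cases e
    · have : d = true := by simpa using h0
      subst this
      have h2 := h2 rfl
      simp only [cond_true, cond_false, one_mul, pw, zpow_zero, mul_one] at *
      rw [show t * (F b * t⁻¹ * ev F (fun _ => t) l) * (cond (lst ((), false) l).2 t 1)⁻¹ =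
        (t * F b * t⁻¹) * (ev F (fun _ => t) l * (cond (lst ((), false) l).2 t 1)⁻¹) by
          simp only [mul_assoc], h2, ih', ← map_mul]
      · simp only [mul_assoc]
      · trivial
    · have : d = false := by simpa using h0
      subst this
      have h1 := h1 rfl
      simp only [cond_true, cond_false, one_mul, pw, zpow_zero, mul_one] at *
      rw [show (F b * t * ev F (fun _ => t) l) * (cond (lst ((), true) l).2 t 1)⁻¹ =
        F b * (t * ev F (fun _ => t) l * (cond (lst ((), true) l).2 t 1)⁻¹) by
          simp only [mul_assoc], h1, ih', ← map_mul]
      · simp only [mul_assoc]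
      · trivial

theorem caseB (hB : LocallyIndicable B) (n : ℕ) (IH : ∀ k < n, PP k)
    (l : List (B × Unit × Bool)) (hn : l.length = n) (hl : CR l) (d : Bool)
    (hlast : lst ((), d) l = ((), d)) (hr : Red ((), d) l) (ha : Alt d l) (hne : l ≠ []) :
    Solv l := by
  have hall := Alt_ne d l ha hr
  have hex : ∀ e, ∃ a ∈ l, a.2.2 = e := by
    intro e
    obtain ⟨b, hb⟩ := lst_mem ((), d) l hne
    rw [hlast] at hb
    by_cases hed : d = e
    · exact ⟨_, hb, hed⟩
    · cases l with
      | nil => exact absurd rfl hne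
      | cons a l =>
        refine ⟨a, by simp, ?_⟩
        have := ha.1
        revert this hed
        cases e <;> cases d <;> simp
  have hφ : ∀ e, ∃ φ : Subgroup.closure {b : B | ∃ a ∈ l, a.2.2 = e ∧ a.1 = b} →* Multiplicative ℤ,
      ∃ a ∈ l, a.2.2 = e ∧ hat _ φ a.1 ≠ 0 := by
    intro e
    obtain ⟨a0, ha0, he⟩ := hex e
    obtain ⟨φ, c0, ⟨a1, hc1, hc3, rfl⟩, hc2⟩ := li_aux hB {b : B | ∃ a ∈ l, a.2.2 = e ∧ a.1 = b}
      (fin_coeff l _) (b := a0.1) ⟨a0, ha0, he, rfl⟩ (hall a0 ha0)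
    refine ⟨φ, a1, hc1, hc3, ?_⟩
    rw [hat_of _ φ ⟨a1.1, Subgroup.subset_closure ⟨a1, hc1, hc3, rfl⟩⟩]
    intro h
    exact hc2 (Multiplicative.toAdd.injective h)
  choose φ hφ using hφ
  let w : Bool → B → ℤ := fun e b => hat _ (φ e) b
  obtain ⟨c, ht, hc⟩ : ∃ c : Bool → ℤ, tot (fun e b => c e * w e b) 0 l = 0 ∧
      ∃ e, c e ≠ 0 := by
    have := fun c => tot_lin w c 0 l
    set S := tot (fun e b => cond e (w e b) 0) 0 l
    set S' := tot (fun e b => cond e 0 (w e b)) 0 l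
    by_cases hS : S = 0 ∧ S' = 0
    · exact ⟨fun _ => 1, by rw [this, hS.1, hS.2]; simp, true, by simp⟩
    · refine ⟨fun e => cond e S' (-S), by rw [this]; simp; ring, ?_⟩
      by_cases h : S' = 0
      · exact ⟨false, by simpa using fun h' => hS ⟨h', h⟩⟩
      · exact ⟨true, by simpa using h⟩
  obtain ⟨D, _, f, z, τ, h1, h2, h3⟩ := core2 hB n IH l hn hl (fun e b => c e * w e b) 0 ht (by
    rintro ⟨k, hk⟩
    have hlf := lev_fin (fun e b => c e * w e b) 0 0 l 0 true (by simp)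
    obtain ⟨b, hb⟩ := lst_mem (0, true) (lev (fun e b => c e * w e b) 0 0 l) (by
      intro h
      have := congrArg List.length h
      rw [lev_length] at this
      exact hne (List.length_eq_zero_iff.1 this))
    rw [hk _ hb, ht] at hlf
    have hk0 : k = 0 := by simpa using hlf.symm
    subst hk0
    obtain ⟨e, he⟩ := hc
    obtain ⟨a, ha, hae, hw⟩ := hφ e
    have := lev_const _ _ _ hk a ha
    simp only [mul_eq_zero] at this
    subst hae
    exact this.elim he hw)
  have hmem : ∀ a ∈ l, ∀ e, a.2.2 = e →
      a.1 ∈ Subgroup.closure {b : B | ∃ a ∈ l, a.2.2 = e ∧ a.1 = b} :=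
    fun a ha e he => Subgroup.subset_closure ⟨a, ha, he, rfl⟩
  obtain ⟨j, hj, hj2⟩ := twist f z h1 h2 _ (φ true) (c true)
  obtain ⟨j', hj', hj2'⟩ := twist f z h1 h2 _ (φ false) (c false)
  obtain ⟨E1, _, g1, g2, hg1, hg2, hg⟩ := amalg (Subgroup.subtype _) j (Subgroup.subtype_injective _) hj
  obtain ⟨E, _, g, t, hgi, hgt⟩ := hnn (g1.comp (Subgroup.subtype _))
    (((MulAut.conj (g2 τ)).toMonoidHom.comp g2).comp j')
    (hg1.comp (Subgroup.subtype_injective _))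
    (((MulAut.conj (g2 τ)).injective.comp hg2).comp hj')
  refine ⟨E, _, g.comp g1, t, hgi.comp hg1, ?_⟩
  have := tele f z τ (fun e b => c e * w e b) (g.comp g1) (g.comp g2) t d l ha (by
    intro a ha hae
    have := hg ⟨a.1, hmem a ha _ hae⟩
    rw [hj2] at this
    exact congrArg g this) (by
    intro a ha hae
    have := hgt ⟨a.1, hmem a ha _ hae⟩
    simp only [MonoidHom.comp_apply] at this
    rw [hj2'] at this
    simpa using this)
  rw [hlast, h3] at this
  simpa using this

end caseB

section all
variable {B : Type} [Group B]

def flp (l : List (B × Unit × Bool)) : List (B × Unit × Bool) :=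
  l.map (fun a => (a.1, a.2.1, !a.2.2))

theorem ev_flp {D : Type} [Group D] (f : B →* D) (t : D) (l : List (B × Unit × Bool)) :
    ev f (fun _ => t⁻¹) l = ev f (fun _ => t) (flp l) := by
  induction l with
  | nil => rfl
  | cons a l ih =>
    obtain ⟨b, u, e⟩ := a
    have : flp ((b, u, e) :: l) = (b, u, !e) :: flp l := rfl
    rw [this, ev, ev, ih]
    cases e <;> simp [pw]

theorem lst_flp (d : Bool) (l : List (B × Unit × Bool)) :
    (lst ((), !d) (flp l)).2 = !(lst ((), d) l).2 := by
  induction l generalizing d with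
  | nil => rfl
  | cons a l ih => exact ih a.2.2

theorem Red_flp (d : Bool) (l : List (B × Unit × Bool)) (h : Red ((), d) l) :
    Red ((), !d) (flp l) := by
  induction l generalizing d with
  | nil => trivial
  | cons a l ih =>
    refine ⟨fun h1 _ => ?_, ih a.2.2 h.2⟩
    have := h.1 h1 rfl
    simp only at this
    simp [this]

theorem CR_flp (l : List (B × Unit × Bool)) (h : CR l) : CR (flp l) := by
  obtain ⟨⟨u, d⟩, hp, hr⟩ := h
  refine ⟨((), !d), ?_, Red_flp d l hr⟩
  apply Prod.ext
  · rfl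
  · rw [lst_flp, hp]

/-- substitution `t = u a` -/
def nrm (a : B) : Bool → List (B × Unit × Bool) → List (B × Unit × Bool)
  | _, [] => []
  | d, (b, u, e) :: l => (cond d a 1 * b * cond e 1 a⁻¹, u, e) :: nrm a e l

theorem nrm_length (a : B) (d : Bool) (l : List (B × Unit × Bool)) :
    (nrm a d l).length = l.length := by
  induction l generalizing d with
  | nil => rfl
  | cons c l ih => obtain ⟨b, u, e⟩ := c; simp [nrm, ih]

theorem nrm_lst (a : B) (d : Bool) (p : Unit × Bool) (l : List (B × Unit × Bool)) :
    lst p (nrm a d l) = lst p l := by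
  induction l generalizing d p with
  | nil => rfl
  | cons c l ih => obtain ⟨b, u, e⟩ := c; exact ih _ _

theorem nrm_red (a : B) (d : Bool) (l : List (B × Unit × Bool)) (h : Red ((), d) l) :
    Red ((), d) (nrm a d l) := by
  induction l generalizing d with
  | nil => trivial
  | cons c l ih =>
    obtain ⟨b, u, e⟩ := c
    refine ⟨fun h1 _ => ?_, ih _ h.2⟩
    have := h.1
    simp only at this h1 ⊢
    cases e <;> cases d <;> simp at h1 this ⊢
    · exact this h1
    · exact this h1

theorem nrm_ev {D : Type} [Group D] (f : B →* D) (t : D) (a : B) (d : Bool)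
    (l : List (B × Unit × Bool)) :
    f (cond d a 1) * ev f (fun _ => t * f a) l =
      ev f (fun _ => t) (nrm a d l) * f (cond (lst ((), d) l).2 a 1) := by
  induction l generalizing d with
  | nil => simp [ev, nrm, lst]
  | cons c l ih =>
    obtain ⟨b, u, e⟩ := c
    have := ih e
    simp only [nrm, ev, lst]
    rw [mul_assoc (f _ * pw _ e)]
    have e0 : (u, e) = ((), e) := rfl
    rw [e0, ← this]
    cases e <;> simp [pw, mul_assoc]

theorem caseA' (hB : LocallyIndicable B) (n : ℕ) (IH : ∀ k < n, PP k) (b : B)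
    (l' : List (B × Unit × Bool)) (l : List (B × Unit × Bool)) (hl' : l = (b, (), true) :: l')
    (hn : l.length = n) (hl : CR l) (hlast : (lst ((), true) l).2 = true) : Solv l := by
  have hl2 : Red ((), true) l := by
    obtain ⟨p, hp, hr⟩ := hl
    rw [hl'] at hp hlast
    have : p = ((), true) := by
      rw [← hp]
      exact Prod.ext rfl hlast
    rwa [← this]
  obtain ⟨D, _, f, t, hf, ht⟩ := caseA hB n IH (nrm b⁻¹ true l') (nrm b⁻¹ true l)
    (by rw [hl']; simp [nrm]) ((nrm_length _ _ _).trans hn)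
    ⟨((), true), by rw [nrm_lst]; exact Prod.ext rfl hlast, nrm_red _ _ _ hl2⟩
    (by rw [nrm_lst, hlast])
  refine ⟨D, _, f, t * f b⁻¹, hf, ?_⟩
  have := nrm_ev f t b⁻¹ true l
  rw [hlast, ht] at this
  simpa using this

theorem caseA'' (hB : LocallyIndicable B) (n : ℕ) (IH : ∀ k < n, PP k) (b : B) (e : Bool)
    (l' : List (B × Unit × Bool)) (l : List (B × Unit × Bool)) (hl' : l = (b, (), e) :: l')
    (hn : l.length = n) (hl : CR l) (hlast : (lst ((), e) l).2 = e) : Solv l := by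
  cases e
  · obtain ⟨D, _, f, t, hf, ht⟩ := caseA' hB n IH b (flp l') (flp l) (by rw [hl']; rfl)
      (by simp [flp, hn]) (CR_flp l hl) (by
        have := lst_flp false l
        rw [hlast] at this
        exact this)
    exact ⟨D, _, f, t⁻¹, hf, by rw [ev_flp]; exact ht⟩
  · exact caseA' hB n IH b l' l hl' hn hl hlast

theorem PP_all (n : ℕ) : PP n := by
  induction n using Nat.strong_induction_on with
  | _ n IH =>
  intro C _ hC l hn hl
  by_cases hne : l = []
  · subst hne
    exact ⟨C, _, MonoidHom.id C, 1, fun _ _ h => h, rfl⟩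
  obtain ⟨⟨u, d⟩, hp, hr⟩ := hl
  rcases find_bad (fun q a => q.2 ≠ a.2.2) ((), d) l with h | ⟨l1, a, l2, rfl, ha⟩
  · exact caseB hC n IH l hn ⟨_, hp, hr⟩ d hp hr (Alt_of d l h) hne
  · have hcr : CR ((a :: l2) ++ l1) := CR_rot _ _ ⟨_, hp, hr⟩
    have hlast : lst a.2 ((a :: l2) ++ l1) = lst ((), d) l1 := by
      rw [lst_append]
      congr 1
      rw [lst_append] at hp
      exact hp
    push Not at ha
    obtain ⟨D, _, f, t, hf, ht⟩ := caseA'' hC n IH a.1 a.2.2 (l2 ++ l1) ((a :: l2) ++ l1) rfl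
      (by rw [← hn]; simp; omega) hcr (by
        rw [← ha, ← hlast]; rfl)
    exact ⟨D, _, f, t, hf, ev_rot _ _ _ _ ht⟩

end all

section final
variable {B ι : Type} [Group B]

def HasW (x : GG B ι) : Prop := ∃ w b, x = ev inB tau w * inB b

theorem HasW_inB (b : B) (x : GG B ι) (h : HasW x) : HasW (inB b * x) := by
  obtain ⟨w, c, rfl⟩ := h
  cases w with
  | nil => exact ⟨[], b * c, by simp [ev]⟩
  | cons a w =>
    obtain ⟨b', i, e⟩ := a
    exact ⟨(b * b', i, e) :: w, c, by simp [ev, mul_assoc]⟩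

theorem HasW_tau (i : ι) (e : Bool) (x : GG B ι) (h : HasW x) : HasW (pw (tau i) e * x) := by
  obtain ⟨w, c, rfl⟩ := h
  exact ⟨(1, i, e) :: w, c, by simp [ev, mul_assoc]⟩

theorem HasW_all (x : GG B ι) : HasW x := by
  induction x using Coprod.induction_on' with
  | one => exact ⟨[], 1, by simp [ev]⟩
  | inl_mul b x ih => exact HasW_inB b x ih
  | inr_mul m x ih =>
    induction m using FreeGroup.induction_on generalizing x with
    | C1 => simpa using ih
    | of i => exact HasW_tau i true x ih
    | inv_of i _ => 
      have := HasW_tau i false x ih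
      simpa [pw, tau] using this
    | mul a b h1 h2 =>
      rw [map_mul, mul_assoc]
      exact h1 _ (h2 _ ih)

theorem isConj_mul_comm {G : Type} [Group G] (a b : G) : IsConj (a * b) (b * a) :=
  isConj_iff.2 ⟨b, by group⟩

theorem word_absorb (w : List (B × ι × Bool)) (hw : w ≠ []) (b : B) :
    ∃ w' : List (B × ι × Bool), w' ≠ [] ∧ w'.length = w.length ∧
      IsConj (ev inB tau w' : GG B ι) (ev inB tau w * inB b) := by
  cases w with
  | nil => exact absurd rfl hw
  | cons a w =>
    obtain ⟨b', i, e⟩ := a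
    refine ⟨(b * b', i, e) :: w, by simp, by simp, ?_⟩
    have : (ev inB tau ((b * b', i, e) :: w) : GG B ι) = inB b * ev inB tau ((b', i, e) :: w) := by
      simp [ev, mul_assoc]
    rw [this]
    exact isConj_mul_comm _ _

theorem good_word (r : GG B ι) (hr : ∀ b, ¬ IsConj (inB b) r) :
    ∃ w : List (B × ι × Bool), CR w ∧ w ≠ [] ∧ IsConj (ev inB tau w) r := by
  classical
  have hex : ∃ n, ∃ w : List (B × ι × Bool), w.length = n ∧ w ≠ [] ∧ IsConj (ev inB tau w) r := by
    obtain ⟨w, b, rfl⟩ := HasW_all r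
    by_cases hw : w = []
    · exact absurd (by rw [hw, ev, one_mul]) (hr b)
    · obtain ⟨w', h1, h2, h3⟩ := word_absorb w hw b
      exact ⟨_, w', rfl, h1, h3⟩
  obtain ⟨w, hn, hw, hc⟩ := Nat.find_spec hex
  have hmin := fun m => Nat.find_min hex (m := m)
  rw [← hn] at hmin
  refine ⟨w, ?_, hw, hc⟩
  obtain ⟨a0, w0, hw0⟩ := List.exists_cons_of_ne_nil hw
  refine ⟨lst a0.2 w, lst_lst _ _, Red_of_forall _ _ ?_⟩
  by_contra! hcon
  obtain ⟨l1, a, l2, hl, ha1, hah, hae⟩ := hcon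
  have hlast : lst a.2 (l2 ++ l1) = lst (lst a0.2 w) l1 := by
    rw [lst_append]
    congr 1
    rw [hl, lst_append]
    rfl
  have hc2 : IsConj (ev inB tau (a :: (l2 ++ l1))) r := by
    refine IsConj.trans ?_ hc
    have : a :: (l2 ++ l1) = (a :: l2) ++ l1 := rfl
    rw [this, hl, ev_append, ev_append]
    exact isConj_mul_comm _ _
  rcases List.eq_nil_or_concat (l2 ++ l1) with hnil | ⟨u, c, hu⟩
  · rw [hnil] at hlast
    apply hae
    rw [← hlast]
    rfl
  · rw [List.concat_eq_append] at hu
    rw [hu, lst_append] at hlast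
    rw [hu] at hc2
    have hlc : c.2 = lst (lst a0.2 w) l1 := hlast
    rw [← hlc] at hah hae
    have hlen : w.length = u.length + 2 := by
      have := congrArg List.length hu
      simp at this
      rw [hl]
      simp
      omega
    obtain ⟨b1, i1, e1⟩ := a
    obtain ⟨b, i, e⟩ := c
    simp only at hah hae ha1
    subst hah
    subst ha1
    have hee : (pw (tau i) e : GG B ι) = (pw (tau i) e1)⁻¹ := by
      revert hae
      cases e <;> cases e1 <;> simp [pw]
    have hc3 : IsConj (ev inB tau u * inB b) r := by
      refine IsConj.trans ?_ hc2
      refine isConj_iff.2 ⟨pw (tau i) e1, ?_⟩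
      rw [ev, ev_append, ev, ev, hee]
      simp [mul_assoc]
    by_cases hu0 : u = []
    · subst hu0
      exact hr b (by simpa [ev] using hc3)
    · obtain ⟨w', h1, h2, h3⟩ := word_absorb u hu0 b
      exact hmin u.length (by omega) ⟨w', h2, h1, h3.trans hc3⟩

end final

end Frei

/-- If `p` is primitive in the free group `F`, `H` is locally indicable and
`r ∈ F ∗ H` is not conjugate into `F`, `H` or `⟨p⟩ ∗ H`, then `⟨p⟩ ∗ H` embeds
canonically into `(F ∗ H)/⟨⟨r⟩⟩`. -/
theorem embed_primitive_times_H {α H : Type} [Group H]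
    (hH : LocallyIndicable H)
    (p : FreeGroup α) (hp : IsPrimitive p)
    (r : Coprod (FreeGroup α) H)
    (hrA : ¬ ∃ a : FreeGroup α, IsConj (Coprod.inl a) r)
    (hrH : ¬ ∃ h : H, IsConj (Coprod.inr h) r)
    (hrS : ¬ ∃ s ∈ Subgroup.closure
        ({Coprod.inl p} ∪ Set.range (Coprod.inr : H →* Coprod (FreeGroup α) H) :
          Set (Coprod (FreeGroup α) H)), IsConj s r) :
    Set.InjOn (QuotientGroup.mk' (Subgroup.normalClosure {r}))
      (Subgroup.closure
        ({Coprod.inl p} ∪ Set.range (Coprod.inr : H →* Coprod (FreeGroup α) H) :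
          Set (Coprod (FreeGroup α) H))) := by
  obtain ⟨β, e, he⟩ := hp
  let Ψ : Frei.GG H (Option β) →* Coprod (FreeGroup α) H :=
    Frei.glift Coprod.inr (fun i => Coprod.inl (e (FreeGroup.of i)))
  let Φ : Coprod (FreeGroup α) H →* Frei.GG H (Option β) :=
    Coprod.lift ((Coprod.inr : FreeGroup (Option β) →* Frei.GG H (Option β)).comp
      e.symm.toMonoidHom) Frei.inB
  have hΨB : ∀ h : H, Ψ (Frei.inB h) = Coprod.inr h := fun h => by simp [Ψ]
  have hΨt : ∀ i, Ψ (Frei.tau i) = Coprod.inl (e (FreeGroup.of i)) := fun i => by simp [Ψ]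
  have hΨr : ∀ x : FreeGroup (Option β), Ψ (Coprod.inr x) = Coprod.inl (e x) := by
    intro x
    have : Ψ.comp Coprod.inr = (Coprod.inl : FreeGroup α →* Coprod (FreeGroup α) H).comp
        e.toMonoidHom := by
      apply FreeGroup.ext_hom
      intro i
      exact hΨt i
    exact DFunLike.congr_fun this x
  have hΨΦ : ∀ x, Ψ (Φ x) = x := by
    intro x
    have : Ψ.comp Φ = MonoidHom.id _ := by
      apply Coprod.hom_ext
      · ext x
        simp [Φ, hΨr]
      · ext x
        simp [Φ, hΨB]
    exact DFunLike.congr_fun this x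
  have hΦp : Φ (Coprod.inl p) = Frei.tau none := by
    rw [← he]
    simp [Φ, Frei.tau]
  have hΦH : ∀ h : H, Φ (Coprod.inr h) = Frei.inB h := fun h => by simp [Φ]
  obtain ⟨w, hw, hwne, hwc⟩ := Frei.good_word (Φ r) (by
    intro b hb
    have := Ψ.map_isConj hb
    rw [hΨΦ, hΨB] at this
    exact hrH ⟨b, this⟩)
  obtain ⟨a, ha, hane⟩ : ∃ a ∈ w, a.2.1 ≠ none := by
    by_contra! hcon
    have h1 := Frei.ev_mem (S := {none}) w hcon
    have h2 : (Frei.CS {none} : Subgroup (Frei.GG H (Option β))) ≤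
        (Subgroup.closure ({Coprod.inl p} ∪ Set.range (Coprod.inr : H →* Coprod (FreeGroup α) H) :
          Set (Coprod (FreeGroup α) H))).comap Ψ := by
      unfold Frei.CS
      rw [Subgroup.closure_le]
      rintro x (⟨b, rfl⟩ | ⟨i, hi, rfl⟩)
      · refine Subgroup.subset_closure (Or.inr ⟨b, ?_⟩)
        rw [hΨB]
      · refine Subgroup.subset_closure (Or.inl ?_)
        have hi' : i = none := hi
        rw [hΨt, hi', he]
        rfl
    have := Ψ.map_isConj hwc
    rw [hΨΦ] at this
    exact hrS ⟨_, h2 h1, this⟩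
  obtain ⟨D, _, g, hg1, hg2⟩ := Frei.lemT hH w hw a.2.1 ⟨a, ha, rfl⟩ (Frei.PP_all _)
  refine Frei.quot_inj r _ ⟨D, inferInstance, g.comp Φ, ?_, ?_⟩
  · have := g.map_isConj hwc
    rw [hg1, isConj_one_right] at this
    exact this
  · have hle : Subgroup.closure ({Coprod.inl p} ∪
        Set.range (Coprod.inr : H →* Coprod (FreeGroup α) H) : Set (Coprod (FreeGroup α) H)) ≤
        (Frei.CS {i | i ≠ a.2.1}).comap Φ := by
      rw [Subgroup.closure_le]
      rintro x (hx | ⟨b, rfl⟩)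
      · have hx' : x = Coprod.inl p := hx
        change Φ x ∈ Frei.CS _
        rw [hx', hΦp]
        exact Frei.tau_mem (Ne.symm hane)
      · change Φ _ ∈ Frei.CS _
        rw [hΦH]
        exact Frei.inB_mem _ _
    intro x hx y hy hxy
    have := hg2 (hle hx) (hle hy) hxy
    rw [← hΨΦ x, this, hΨΦ]
end
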